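/- arXiv:1908.05198 — 6 statements merged into one kernel-verified Lean document; each statement's English description precedes it below -/
import Mathlib

section
/- There exist absolute constants c, C > 0 such that the following holds. For all n, B, k ∈ ℕ with k ≥ 2 and k·B ≤ n, for truly random independent hash functions h_1,...,h_k : {1,...,n} → {1,...,B}, and for every i ∈ {1,...,n}, the Count-Min estimate f̃_i of the Zipfian frequency f_i = 1/i satisfies c·log(n/B)/B ≤ E[f̃_i − f_i] ≤ C·log(n/B)/B. -/
/-- Expectation of a real-valued random variable on a finite probability space
with the uniform distribution. -/
noncomputable def expUnif {Ω : Type*} [Fintype Ω] (X : Ω → ℝ) : ℝ :=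
  (∑ ω : Ω, X ω) / (Fintype.card Ω : ℝ)

/-- Zipfian frequency of the item indexed by `i : Fin n` (representing item `i+1`):
`f_{i+1} = 1/(i+1)`. -/
noncomputable def zipf {n : ℕ} (i : Fin n) : ℝ := ((i : ℝ) + 1)⁻¹

/-- The Count-Min estimate of item `i` given the `k` hash functions `h`:
the minimum over the rows of the total frequency hashing to item `i`'s bucket. -/
noncomputable def cmEst {n B k : ℕ} (f : Fin n → ℝ) (h : Fin k → Fin n → Fin B)
    (i : Fin n) : ℝ :=
  ⨅ ℓ : Fin k, ∑ j : Fin n, if h ℓ j = h ℓ i then f j else 0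

namespace CMZ

open Finset

lemma eu_mono {Ω : Type*} [Fintype Ω] {X Y : Ω → ℝ} (h : ∀ ω, X ω ≤ Y ω) :
    expUnif X ≤ expUnif Y := by
  unfold expUnif
  exact div_le_div_of_nonneg_right (Finset.sum_le_sum fun ω _ => h ω) (by positivity)

lemma eu_add {Ω : Type*} [Fintype Ω] (X Y : Ω → ℝ) :
    expUnif (fun ω => X ω + Y ω) = expUnif X + expUnif Y := by
  unfold expUnif
  rw [Finset.sum_add_distrib, add_div]

lemma eu_mul {Ω : Type*} [Fintype Ω] (a : ℝ) (X : Ω → ℝ) :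
    expUnif (fun ω => a * X ω) = a * expUnif X := by
  unfold expUnif
  rw [← Finset.mul_sum, mul_div_assoc]

lemma eu_const {Ω : Type*} [Fintype Ω] [Nonempty Ω] (a : ℝ) :
    expUnif (fun _ : Ω => a) = a := by
  unfold expUnif
  have : (Fintype.card Ω : ℝ) ≠ 0 := by exact_mod_cast Fintype.card_ne_zero
  simp only [Finset.sum_const, Finset.card_univ, nsmul_eq_mul]
  field_simp

lemma eu_nonneg {Ω : Type*} [Fintype Ω] {X : Ω → ℝ} (h : ∀ ω, 0 ≤ X ω) :
    0 ≤ expUnif X := by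
  unfold expUnif
  exact div_nonneg (Finset.sum_nonneg fun ω _ => h ω) (by positivity)

lemma eu_sum {Ω ι : Type*} [Fintype Ω] (s : Finset ι) (X : ι → Ω → ℝ) :
    expUnif (fun ω => ∑ a ∈ s, X a ω) = ∑ a ∈ s, expUnif (X a) := by
  unfold expUnif
  rw [Finset.sum_comm, Finset.sum_div]

lemma eu_prod {ι G : Type*} [Fintype ι] [DecidableEq ι] [Fintype G] (F : ι → G → ℝ) :
    expUnif (fun h : ι → G => ∏ l, F l (h l)) = ∏ l, expUnif (F l) := by
  unfold expUnif
  rw [Finset.prod_div_distrib, Finset.prod_univ_sum, Fintype.piFinset_univ]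
  congr 1
  simp

lemma eu_row {ι G : Type*} [Fintype ι] [DecidableEq ι] [Fintype G] [Nonempty G]
    (l : ι) (F : G → ℝ) :
    expUnif (fun h : ι → G => F (h l)) = expUnif F := by
  have := eu_prod (fun a : ι => if a = l then F else fun _ : G => (1 : ℝ))
  rw [Finset.prod_eq_single l] at this
  · rw [if_pos rfl] at this
    rw [← this]
    congr 1
    funext h
    rw [Finset.prod_eq_single l]
    · simp
    · intro b _ hb; simp [hb]
    · simp
  · intro b _ hb; rw [if_neg hb, eu_const]
  · simp

lemma eu_row2 {ι G : Type*} [Fintype ι] [DecidableEq ι] [Fintype G] [Nonempty G]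
    (l m : ι) (hlm : l ≠ m) (F : G → ℝ) :
    expUnif (fun h : ι → G => F (h l) * F (h m)) = expUnif F * expUnif F := by
  have := eu_prod (fun a : ι => if a = l ∨ a = m then F else fun _ : G => (1 : ℝ))
  rw [Finset.prod_eq_mul l m hlm] at this
  · rw [if_pos (Or.inl rfl), if_pos (Or.inr rfl)] at this
    rw [← this]
    congr 1
    funext h
    rw [Finset.prod_eq_mul l m hlm]
    · simp
    · intro b _ hb; simp [hb]
    · simp
    · simp
  · intro b _ hb; rw [if_neg (by tauto), eu_const]
  · simp
  · simp

lemma eu_ite {B : ℕ} (hB : 1 ≤ B) (b : Fin B) (x y : ℝ) :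
    expUnif (fun c : Fin B => if c = b then x else y) = y + (x - y) / B := by
  have hB' : (B : ℝ) ≠ 0 := by positivity
  have : (fun c : Fin B => if c = b then x else y)
      = fun c => y + (x - y) * (if c = b then 1 else 0) := by
    funext c; split_ifs <;> ring
  have hne : Nonempty (Fin B) := ⟨b⟩
  rw [this, eu_add, eu_const, eu_mul]
  unfold expUnif
  simp
  ring

lemma eu_coll {n B : ℕ} (hB : 1 ≤ B) (i : Fin n) (u : Fin n → ℝ) :
    expUnif (fun g : Fin n → Fin B => ∏ j ∈ univ.erase i, if g j = g i then u j else 1)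
      = ∏ j ∈ univ.erase i, (1 + (u j - 1) / B) := by
  have hB' : (B : ℝ) ≠ 0 := by positivity
  let v : Fin B → Fin n → Fin B → ℝ := fun b j c =>
    if j = i then (if c = b then 1 else 0) else (if c = b then u j else 1)
  have h1 : ∀ g : Fin n → Fin B,
      (∏ j ∈ univ.erase i, if g j = g i then u j else 1) = ∑ b, ∏ j, v b j (g j) := by
    intro g
    rw [Finset.sum_eq_single (g i)]
    · rw [← Finset.mul_prod_erase univ _ (Finset.mem_univ i)]
      simp only [v, if_true, one_mul]
      refine Finset.prod_congr rfl fun j hj => ?_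
      rw [if_neg (Finset.ne_of_mem_erase hj)]
    · intro b _ hb
      refine Finset.prod_eq_zero (Finset.mem_univ i) ?_
      simp [v, hb.symm]
    · simp
  simp only [h1]
  rw [eu_sum]
  have h2 : ∀ b : Fin B, expUnif (fun g : Fin n → Fin B => ∏ j, v b j (g j))
      = (1 / B) * ∏ j ∈ univ.erase i, (1 + (u j - 1) / B) := by
    intro b
    rw [eu_prod, ← Finset.mul_prod_erase univ _ (Finset.mem_univ i)]
    congr 1
    · simp only [v, if_true]
      rw [eu_ite hB]; ring
    · refine Finset.prod_congr rfl fun j hj => ?_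
      simp only [v, if_neg (Finset.ne_of_mem_erase hj)]
      rw [eu_ite hB]
  simp only [h2]
  rw [Finset.sum_const, Finset.card_univ, Fintype.card_fin, nsmul_eq_mul]
  field_simp

lemma eu_pair {n B : ℕ} (hB : 1 ≤ B) (i j : Fin n) (hij : j ≠ i) (a : ℝ) :
    expUnif (fun g : Fin n → Fin B => if g j = g i then a else 0) = a / B := by
  have hne : Nonempty (Fin n → Fin B) := ⟨fun _ => ⟨0, hB⟩⟩
  have h := eu_coll hB i (fun l => if l = j then a + 1 else 1)
  have hj : j ∈ univ.erase i := Finset.mem_erase.2 ⟨hij, Finset.mem_univ _⟩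
  rw [Finset.prod_eq_single_of_mem j hj (fun l _ hl => by simp [hl])] at h
  have h1 : (fun g : Fin n → Fin B => ∏ l ∈ univ.erase i,
      if g l = g i then (if l = j then a + 1 else 1) else (1 : ℝ))
      = fun g => (if g j = g i then a else 0) + 1 := by
    funext g
    rw [Finset.prod_eq_single_of_mem j hj (fun l _ hl => by simp [hl])]
    rw [if_pos rfl]
    split_ifs <;> simp
  rw [h1, eu_add, eu_const] at h
  simp at h
  linarith

/-- Error of a single row. -/
noncomputable def err {n B : ℕ} (s : Finset (Fin n)) (a : Fin n → ℝ) (i : Fin n)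
    (g : Fin n → Fin B) : ℝ := ∑ j ∈ s, if g j = g i then a j else 0

lemma eu_err {n B : ℕ} (hB : 1 ≤ B) (s : Finset (Fin n)) (a : Fin n → ℝ) (i : Fin n)
    (hs : i ∉ s) : expUnif (fun g : Fin n → Fin B => err s a i g) = (∑ j ∈ s, a j) / B := by
  unfold err
  rw [eu_sum, Finset.sum_div]
  refine Finset.sum_congr rfl fun j hj => eu_pair hB i j ?_ _
  rintro rfl; exact hs hj

lemma zipf_pos {n : ℕ} (j : Fin n) : 0 < zipf j := by unfold zipf; positivity

lemma err_nonneg {n B : ℕ} (s : Finset (Fin n)) (i : Fin n)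
    (g : Fin n → Fin B) : 0 ≤ err s zipf i g :=
  Finset.sum_nonneg fun j _ => by split_ifs <;> [exact (zipf_pos j).le; exact le_rfl]

lemma row_eq {n B : ℕ} (i : Fin n) (g : Fin n → Fin B) :
    (∑ j : Fin n, if g j = g i then zipf j else 0) = zipf i + err (univ.erase i) zipf i g := by
  unfold err
  rw [← Finset.add_sum_erase univ _ (Finset.mem_univ i)]
  simp

lemma cm_le {n B k : ℕ} (i : Fin n) (h : Fin k → Fin n → Fin B) (l : Fin k) :
    cmEst zipf h i - zipf i ≤ err (univ.erase i) zipf i (h l) := by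
  have : cmEst zipf h i ≤ _ := ciInf_le (Set.finite_range _).bddBelow l
  rw [row_eq] at this
  linarith

lemma cm_eq {n B k : ℕ} (hk : 2 ≤ k) (i : Fin n) (h : Fin k → Fin n → Fin B) :
    ∃ l, cmEst zipf h i - zipf i = err (univ.erase i) zipf i (h l) := by
  haveI : Nonempty (Fin k) := ⟨⟨0, by omega⟩⟩
  obtain ⟨l, hl⟩ := exists_eq_ciInf_of_finite
    (f := fun l : Fin k => ∑ j : Fin n, if h l j = h l i then zipf j else 0)
  refine ⟨l, ?_⟩
  unfold cmEst
  rw [← hl]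
  rw [row_eq]; ring

lemma sqrt_sum_le {ι : Type*} (s : Finset ι) (a : ι → ℝ) (ha : ∀ j, 0 ≤ a j) :
    √(∑ j ∈ s, a j) ≤ ∑ j ∈ s, √(a j) := by
  classical
  induction s using Finset.induction_on with
  | empty => simp
  | insert x s hx ih =>
    rw [Finset.sum_insert hx, Finset.sum_insert hx]
    refine le_trans ?_ (add_le_add_right ih _)
    have h0 : 0 ≤ ∑ j ∈ s, a j := Finset.sum_nonneg fun j _ => ha j
    rw [Real.sqrt_le_left (by positivity)]
    nlinarith [Real.sq_sqrt (ha x), Real.sq_sqrt h0,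
      mul_nonneg (Real.sqrt_nonneg (a x)) (Real.sqrt_nonneg (∑ j ∈ s, a j))]

lemma sqrt_err {n B : ℕ} (s : Finset (Fin n)) (i : Fin n) (g : Fin n → Fin B) :
    √(err s zipf i g) ≤ err s (fun j => √(zipf j)) i g := by
  unfold err
  refine (sqrt_sum_le s _ fun j => ?_).trans (le_of_eq ?_)
  · split_ifs <;> [exact (zipf_pos j).le; exact le_rfl]
  · refine Finset.sum_congr rfl fun j _ => ?_
    split_ifs <;> simp

lemma sum_sqrt (B : ℕ) : ∑ j ∈ range B, √(((j : ℝ) + 1)⁻¹) ≤ 2 * √B := by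
  induction B with
  | zero => simp
  | succ B ih =>
    rw [Finset.sum_range_succ]
    refine (add_le_add_left ih _).trans ?_
    push_cast
    rw [Real.sqrt_inv]
    have h1 : (0 : ℝ) < √((B : ℝ) + 1) := by positivity
    have h0 := Real.sqrt_nonneg (B : ℝ)
    have e1 := Real.sq_sqrt (show (0 : ℝ) ≤ (B : ℝ) + 1 by positivity)
    have e0 := Real.sq_sqrt (show (0 : ℝ) ≤ (B : ℝ) by positivity)
    set x := √((B : ℝ) + 1)
    set y := √(B : ℝ)
    have : x⁻¹ ≤ 2 * x - 2 * y := by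
      rw [inv_le_iff_one_le_mul₀ h1]
      nlinarith [sq_nonneg (x - y)]
    linarith

lemma sum_log (B m : ℕ) (hB : 1 ≤ B) :
    ∑ j ∈ Ico B (B + m), ((j : ℝ) + 1)⁻¹ ≤ Real.log (((B + m : ℕ) : ℝ) / B) := by
  have hB' : (0 : ℝ) < B := by positivity
  induction m with
  | zero => simp [hB'.ne']
  | succ m ih =>
    rw [← add_assoc, Finset.sum_Ico_succ_top (by omega)]
    have hp : (0 : ℝ) < (B + m : ℕ) := by positivity
    set p : ℝ := ((B + m : ℕ) : ℝ) with hpd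
    have e : (((B + m + 1 : ℕ)) : ℝ) = p + 1 := by push_cast [hpd]; ring
    rw [e]
    have h2 : (p + 1)⁻¹ ≤ Real.log (p + 1) - Real.log p := by
      have := Real.one_sub_inv_le_log_of_pos (show 0 < (p + 1) / p by positivity)
      rw [Real.log_div (by positivity) (by positivity)] at this
      refine le_trans (le_of_eq ?_) this
      field_simp
      ring
    rw [Real.log_div (by positivity) (by positivity)] at ih ⊢
    linarith

lemma upper {n B k : ℕ} (hk : 2 ≤ k) (hB : 1 ≤ B) (hn : k * B ≤ n) (i : Fin n) :
    expUnif (fun h : Fin k → Fin n → Fin B => cmEst zipf h i - zipf i) ≤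
            8 * Real.log ((n : ℝ) / (B : ℝ)) / (B : ℝ) := by
  have hB' : (0 : ℝ) < B := by positivity
  have hne : Nonempty (Fin n → Fin B) := ⟨fun _ => ⟨0, hB⟩⟩
  have h2B : 2 * B ≤ n := le_trans (Nat.mul_le_mul_right _ hk) hn
  let sH : Finset (Fin n) := (univ.erase i).filter (fun j => (j : ℕ) < B)
  let sL : Finset (Fin n) := (univ.erase i).filter (fun j => ¬ (j : ℕ) < B)
  let l0 : Fin k := ⟨0, by omega⟩
  let l1 : Fin k := ⟨1, by omega⟩
  have hl : l0 ≠ l1 := by simp [l0, l1]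
  let F : (Fin n → Fin B) → ℝ := fun g => err sH (fun j => √(zipf j)) i g
  let L : (Fin n → Fin B) → ℝ := fun g => err sL zipf i g
  have hb : ∀ h : Fin k → Fin n → Fin B, cmEst zipf h i - zipf i ≤
      F (h l0) * F (h l1) + (L (h l0) + L (h l1)) := by
    intro h
    have a0 := cm_le i h l0
    have a1 := cm_le i h l1
    have sp : ∀ g : Fin n → Fin B,
        err (univ.erase i) zipf i g = err sH zipf i g + err sL zipf i g := by
      intro g
      unfold err
      exact (Finset.sum_filter_add_sum_filter_not _ _ _).symm
    rw [sp] at a0 a1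
    have s0 := sqrt_err sH i (h l0)
    have s1 := sqrt_err sH i (h l1)
    have n0 := err_nonneg sH i (h l0)
    have n1 := err_nonneg sH i (h l1)
    have m0 := err_nonneg sL i (h l0)
    have m1 := err_nonneg sL i (h l1)
    have hm : √(err sH zipf i (h l0)) * √(err sH zipf i (h l1)) ≤ F (h l0) * F (h l1) :=
      mul_le_mul s0 s1 (Real.sqrt_nonneg _) ((Real.sqrt_nonneg _).trans s0)
    have q0 := Real.sq_sqrt n0
    have q1 := Real.sq_sqrt n1
    have p0 := Real.sqrt_nonneg (err sH zipf i (h l0))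
    have p1 := Real.sqrt_nonneg (err sH zipf i (h l1))
    simp only [L]
    rcases le_total (√(err sH zipf i (h l0))) (√(err sH zipf i (h l1))) with hh | hh
    · nlinarith
    · nlinarith
  refine (eu_mono hb).trans ?_
  rw [eu_add, eu_add, eu_row2 l0 l1 hl F, eu_row l0 L, eu_row l1 L]
  have hF : expUnif F ≤ 2 * √B / B := by
    simp only [F]
    rw [eu_err hB _ _ _ (by simp [sH])]
    refine div_le_div_of_nonneg_right ?_ hB'.le
    refine le_trans ?_ (sum_sqrt B)
    have : ∑ j ∈ sH, √(zipf j) = ∑ x ∈ sH.map Fin.valEmbedding, √(((x : ℝ) + 1)⁻¹) := by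
      rw [Finset.sum_map]; rfl
    rw [this]
    refine Finset.sum_le_sum_of_subset_of_nonneg ?_ (fun _ _ _ => Real.sqrt_nonneg _)
    intro x hx
    simp only [sH, Finset.mem_map, Finset.mem_filter] at hx
    obtain ⟨j, ⟨_, hj⟩, rfl⟩ := hx
    simpa using hj
  have hF0 : 0 ≤ expUnif F := eu_nonneg fun g => (Real.sqrt_nonneg _).trans (sqrt_err sH i g)
  have hL : expUnif L ≤ Real.log (n / B) / B := by
    simp only [L]
    rw [eu_err hB _ _ _ (by simp [sL])]
    refine div_le_div_of_nonneg_right ?_ hB'.le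
    have hs := sum_log B (n - B) hB
    rw [Nat.add_sub_cancel' (by omega)] at hs
    refine le_trans ?_ hs
    have : ∑ j ∈ sL, zipf j = ∑ x ∈ sL.map Fin.valEmbedding, (((x : ℝ) + 1)⁻¹) := by
      rw [Finset.sum_map]; rfl
    rw [this]
    refine Finset.sum_le_sum_of_subset_of_nonneg ?_ (fun _ _ _ => by positivity)
    intro x hx
    simp only [sL, Finset.mem_map, Finset.mem_filter] at hx
    obtain ⟨j, ⟨_, hj⟩, rfl⟩ := hx
    simpa using hj
  have hFF : expUnif F * expUnif F ≤ 4 / B := by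
    refine (mul_le_mul hF hF hF0 (by positivity)).trans (le_of_eq ?_)
    have := Real.mul_self_sqrt hB'.le
    field_simp
    nlinarith
  have hlog : Real.log 2 ≤ Real.log (n / B) := by
    apply Real.log_le_log (by norm_num)
    rw [le_div_iff₀ hB']
    exact_mod_cast h2B
  have := Real.log_two_gt_d9
  have h4 : 4 / (B : ℝ) ≤ 6 * Real.log (n / B) / B :=
    div_le_div_of_nonneg_right (by linarith) hB'.le
  have e : 8 * Real.log ((n : ℝ) / B) / B = 6 * Real.log (n / B) / B
    + (Real.log (n / B) / B + Real.log (n / B) / B) := by ring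
  linarith

lemma num_ineq (r : ℝ) (hr : 2 ≤ r) :
    21 / 20 * Real.log r ≤ 10 * Real.log ((r + 11) / 12) := by
  have h1 : Real.log r ≤ 20 * Real.log (1 + (r - 1) / 20) := by
    have : r ≤ (1 + (r - 1) / 20) ^ 20 := by
      have := one_add_mul_le_pow (show (-2 : ℝ) ≤ (r - 1) / 20 by linarith) 20
      refine le_trans (le_of_eq ?_) this
      push_cast; ring
    have := Real.log_le_log (by linarith) this
    rwa [Real.log_pow] at this
  have h2 : Real.log r + Real.log (1 + (r - 1) / 20) ≤ 10 * Real.log ((r + 11) / 12) := by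
    rw [← Real.log_mul (by linarith) (by linarith)]
    have e : (10 : ℝ) * Real.log ((r + 11) / 12) = Real.log (((r + 11) / 12) ^ 10) := by
      rw [Real.log_pow]; norm_num
    rw [e]
    apply Real.log_le_log (mul_pos (by linarith) (by linarith))
    obtain ⟨u, hu⟩ : ∃ u, u = (r - 1) / 12 := ⟨_, rfl⟩
    have hr' : r = 1 + 12 * u := by rw [hu]; ring
    subst hr'
    have hu' : 1 / 12 ≤ u := by linarith
    have e2 : ((1 + 12 * u + 11) / 12) = 1 + u := by ring
    rw [e2]
    have h5 : 1 + 10 * u + 45 * u ^ 2 ≤ (1 + u) ^ 10 := by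
      have : (1 + u) ^ 10 = 1 + 10 * u + 45 * u ^ 2 + (120 * u ^ 3 + 210 * u ^ 4 + 252 * u ^ 5
        + 210 * u ^ 6 + 120 * u ^ 7 + 45 * u ^ 8 + 10 * u ^ 9 + u ^ 10) := by ring
      rw [this]
      have : 0 ≤ u := by linarith
      have : 0 ≤ (120 * u ^ 3 + 210 * u ^ 4 + 252 * u ^ 5
        + 210 * u ^ 6 + 120 * u ^ 7 + 45 * u ^ 8 + 10 * u ^ 9 + u ^ 10) := by positivity
      linarith
    refine le_trans ?_ h5
    nlinarith
  linarith

/-- telescoping bound -/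
lemma sum_tele (A : ℝ) (hA : 0 ≤ A) (m : ℕ) :
    Real.log ((m : ℝ) + 2 + A) - Real.log (2 + A) ≤
      ∑ j ∈ range m, ((j : ℝ) + 2 + A)⁻¹ := by
  induction m with
  | zero => simp
  | succ m ih =>
    rw [Finset.sum_range_succ]
    have hp : 0 < (m : ℝ) + 2 + A := by positivity
    set p := (m : ℝ) + 2 + A with hpd
    have e : ((m + 1 : ℕ) : ℝ) + 2 + A = p + 1 := by rw [hpd]; push_cast; ring
    rw [e]
    have := Real.log_le_sub_one_of_pos (show 0 < (p + 1) / p by positivity)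
    rw [Real.log_div (by positivity) (by positivity)] at this
    have e3 : (p + 1) / p - 1 = p⁻¹ := by field_simp; ring
    linarith

lemma sum_low {n B : ℕ} (hB : 1 ≤ B) (hn : 2 * B ≤ n) (i : Fin n) :
    21 / 20 * Real.log ((n : ℝ) / B) ≤
      ∑ j ∈ univ.erase i, 10 * ((j : ℝ) + 1 + 10 * B)⁻¹ := by
  have hB' : (1 : ℝ) ≤ B := by exact_mod_cast hB
  have hn' : 2 * (B : ℝ) ≤ n := by exact_mod_cast hn
  refine (num_ineq _ (by rw [le_div_iff₀ (by positivity)]; exact hn')).trans ?_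
  rw [← Finset.mul_sum]
  refine mul_le_mul_of_nonneg_left ?_ (by norm_num)
  obtain ⟨m, rfl⟩ : ∃ m, n = m + 1 := ⟨n - 1, by omega⟩
  have h1 := sum_tele (10 * B) (by positivity) m
  have h2 : Real.log ((((m + 1 : ℕ) : ℝ) / B + 11) / 12) ≤
      Real.log ((m : ℝ) + 2 + 10 * B) - Real.log (2 + 10 * B) := by
    rw [← Real.log_div (by positivity) (by positivity)]
    apply Real.log_le_log (by positivity)
    rw [div_le_div_iff₀ (by positivity) (by positivity)]
    push_cast at hn' ⊢
    have hr : ((m : ℝ) + 1) / B * B = m + 1 := by field_simp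
    have hr0 : 0 ≤ ((m : ℝ) + 1) / B := by positivity
    set r := ((m : ℝ) + 1) / B
    nlinarith [mul_nonneg hr0 (sub_nonneg.2 hB')]
  refine h2.trans (h1.trans ?_)
  -- compare the sums
  have h3 : ∑ j : Fin (m + 1), ((j : ℝ) + 1 + 10 * B)⁻¹ =
      ∑ j ∈ range m, ((j : ℝ) + 2 + 10 * B)⁻¹ + (1 + 10 * (B : ℝ))⁻¹ := by
    rw [Fin.sum_univ_eq_sum_range (fun j => ((j : ℝ) + 1 + 10 * B)⁻¹), Finset.sum_range_succ']
    congr 1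
    · refine Finset.sum_congr rfl fun j _ => ?_
      push_cast; ring
    · simp
  rw [← Finset.add_sum_erase univ _ (Finset.mem_univ i)] at h3
  have h4 : ((i : ℝ) + 1 + 10 * B)⁻¹ ≤ (1 + 10 * (B : ℝ))⁻¹ := by
    apply inv_anti₀ (by positivity)
    have : (0 : ℝ) ≤ (i : ℝ) := by positivity
    linarith
  linarith

lemma laplace {n B : ℕ} (hB : 1 ≤ B) (hn : 2 * B ≤ n) (i : Fin n) :
    expUnif (fun g : Fin n → Fin B => Real.exp (-(10 * B) * err (univ.erase i) zipf i g)) ≤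
      Real.exp (-(21 / 20 * Real.log ((n : ℝ) / B))) := by
  have hB' : (0 : ℝ) < B := by positivity
  have h1 : (fun g : Fin n → Fin B => Real.exp (-(10 * B) * err (univ.erase i) zipf i g))
      = fun g => ∏ j ∈ univ.erase i,
        if g j = g i then Real.exp (-(10 * B) * zipf j) else 1 := by
    funext g
    unfold err
    rw [Finset.mul_sum, Real.exp_sum]
    refine Finset.prod_congr rfl fun j _ => ?_
    split_ifs <;> simp
  rw [h1, eu_coll hB]
  refine le_trans ?_ (Real.exp_le_exp.2 (neg_le_neg (sum_low hB hn i)))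
  rw [← Finset.sum_neg_distrib, Real.exp_sum]
  have key : ∀ j : Fin n, (Real.exp (-(10 * B) * zipf j) - 1) / B ≤
      -(10 * ((j : ℝ) + 1 + 10 * B)⁻¹) := by
    intro j
    have hx : 0 < 10 * B * zipf j := by have := zipf_pos j; positivity
    have h2 : Real.exp (-(10 * B) * zipf j) ≤ (1 + 10 * B * zipf j)⁻¹ := by
      rw [neg_mul, Real.exp_neg]
      apply inv_anti₀ (by linarith)
      linarith [Real.add_one_le_exp (10 * B * zipf j)]
    rw [div_le_iff₀ hB']
    refine (sub_le_sub_right h2 1).trans (le_of_eq ?_)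
    unfold zipf
    have : (0 : ℝ) < (j : ℝ) + 1 := by positivity
    field_simp
    ring
  refine Finset.prod_le_prod ?_ ?_
  · intro j _
    have : (1 : ℝ) / B ≤ 1 := by
      rw [div_le_one hB']; exact_mod_cast hB
    have h3 : 0 < Real.exp (-(10 * B) * zipf j) / B := by positivity
    rw [sub_div]; linarith
  · intro j _
    have := Real.add_one_le_exp (-(10 * ((j : ℝ) + 1 + 10 * B)⁻¹))
    linarith [key j]

lemma lower {n B k : ℕ} (hk : 2 ≤ k) (hB : 1 ≤ B) (hn : k * B ≤ n) (i : Fin n) :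
    1 / 200 * Real.log ((n : ℝ) / (B : ℝ)) / (B : ℝ) ≤
      expUnif (fun h : Fin k → Fin n → Fin B => cmEst zipf h i - zipf i) := by
  have hB' : (0 : ℝ) < B := by positivity
  have hk' : (0 : ℝ) < k := by positivity
  have hne : Nonempty (Fin n → Fin B) := ⟨fun _ => ⟨0, hB⟩⟩
  have h2B : 2 * B ≤ n := le_trans (Nat.mul_le_mul_right _ hk) hn
  have hkn : (k : ℝ) ≤ n / B := by rw [le_div_iff₀ hB']; exact_mod_cast hn
  set R := Real.log ((n : ℝ) / B) with hR
  let E : (Fin n → Fin B) → ℝ :=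
    fun g => Real.exp (-(10 * B) * err (univ.erase i) zipf i g)
  set m : ℝ := k * Real.exp (-(21 / 20 * R)) with hm
  have hm0 : 0 < m := by positivity
  have hES : expUnif (fun h : Fin k → Fin n → Fin B => ∑ l, E (h l)) ≤ m := by
    rw [eu_sum]
    have : ∀ l : Fin k, expUnif (fun h : Fin k → Fin n → Fin B => E (h l))
        ≤ Real.exp (-(21 / 20 * R)) := fun l => by
      rw [eu_row l E]; exact laplace hB h2B i
    refine (Finset.sum_le_sum fun l _ => this l).trans (le_of_eq ?_)
    simp [hm]
  have hlm : Real.log m ≤ -(1 / 20 * R) := by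
    rw [hm, Real.log_mul (by positivity) (by positivity), Real.log_exp]
    have := Real.log_le_log hk' hkn
    linarith
  have hb : ∀ h : Fin k → Fin n → Fin B,
      (1 / (10 * B) * (1 / 20 * R + 1)) + (-(1 / (10 * B) / m)) * ∑ l, E (h l)
        ≤ cmEst zipf h i - zipf i := by
    intro h
    obtain ⟨l, hl⟩ := cm_eq hk i h
    rw [hl]
    have h1 : E (h l) ≤ ∑ l, E (h l) :=
      Finset.single_le_sum (f := fun l => E (h l)) (fun l _ => (Real.exp_pos _).le)
        (Finset.mem_univ l)
    have h2 := Real.log_le_sub_one_of_pos (show 0 < E (h l) / m from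
      div_pos (Real.exp_pos _) hm0)
    rw [Real.log_div (Real.exp_pos _).ne' hm0.ne', Real.log_exp] at h2
    have h3 : E (h l) / m ≤ (∑ l, E (h l)) / m := div_le_div_of_nonneg_right h1 hm0.le
    have h4 : 1 / 20 * R + 1 - (∑ l, E (h l)) / m ≤
        (10 * B) * err (univ.erase i) zipf i (h l) := by linarith
    have h5 := mul_le_mul_of_nonneg_left h4 (show 0 ≤ 1 / (10 * (B : ℝ)) by positivity)
    have e : 1 / (10 * (B : ℝ)) * ((10 * B) * err (univ.erase i) zipf i (h l))
        = err (univ.erase i) zipf i (h l) := by field_simp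
    rw [e] at h5
    refine le_trans (le_of_eq ?_) h5
    ring
  refine le_trans ?_ (eu_mono hb)
  rw [eu_add, eu_const, eu_mul]
  have h6 := mul_le_mul_of_nonneg_left hES (show 0 ≤ 1 / (10 * (B : ℝ)) / m by positivity)
  have e : 1 / (10 * (B : ℝ)) / m * m = 1 / (10 * (B : ℝ)) := by field_simp
  rw [e] at h6
  have e2 : 1 / 200 * R / B = 1 / (10 * (B : ℝ)) * (1 / 20 * R + 1) - 1 / (10 * (B : ℝ)) := by
    field_simp; ring
  rw [e2]
  linarith

end CMZ

/-- tight bounds `Θ(log(n/B)/B)` for the expected error of Count-Min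
with `k ≥ 2` truly random hash functions into `B` buckets, on Zipfian input. -/
theorem countMin_zipfian_tight :
    ∃ c C : ℝ, 0 < c ∧ 0 < C ∧
      ∀ n B k : ℕ, 2 ≤ k → 1 ≤ B → k * B ≤ n → ∀ i : Fin n,
        c * Real.log ((n : ℝ) / (B : ℝ)) / (B : ℝ) ≤
            expUnif (fun h : Fin k → Fin n → Fin B => cmEst zipf h i - zipf i) ∧
        expUnif (fun h : Fin k → Fin n → Fin B => cmEst zipf h i - zipf i) ≤
            C * Real.log ((n : ℝ) / (B : ℝ)) / (B : ℝ) := by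
  exact ⟨1 / 200, 8, by norm_num, by norm_num, fun n B k hk hB hn i =>
    ⟨CMZ.lower hk hB hn i, CMZ.upper hk hB hn i⟩⟩
end

section
/- There exists an absolute constant C > 0 such that the following holds. For all n ∈ ℕ and all k ≥ 2, for truly random independent hash functions h_1,...,h_k : {1,...,n} → {1,...,n} (i.e., the number of buckets equals the number of items, B = n), and for every i ∈ {1,...,n}, the Count-Min estimate f̃_i of the Zipfian frequency f_i = 1/i satisfies E[f̃_i − f_i] ≤ C/n. -/
lemma expUnif_pair {ι α : Type} [Fintype ι] [DecidableEq ι] [Fintype α] [Nonempty α]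
    (a b : ι) (hab : a ≠ b) (Fa Fb : α → ℝ) :
    expUnif (fun h : ι → α => Fa (h a) * Fb (h b)) = expUnif Fa * expUnif Fb := by
  have hc : (Fintype.card α : ℝ) ≠ 0 := by
    exact_mod_cast Fintype.card_ne_zero
  let G : ι → α → ℝ := fun l => if l = a then Fa else if l = b then Fb else fun _ => 1
  have ha : G a = Fa := by simp [G]
  have hb : G b = Fb := by simp [G, hab.symm]
  have ho : ∀ l, l ≠ a ∧ l ≠ b → G l = fun _ => 1 := by
    rintro l ⟨h1, h2⟩
    simp [G, h1, h2]
  have h1 : ∀ h : ι → α, Fa (h a) * Fb (h b) = ∏ l, G l (h l) := by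
    intro h
    rw [Fintype.prod_eq_mul a b hab, ha, hb]
    intro l hl
    rw [ho l hl]
  have h2 : ∑ h : ι → α, ∏ l, G l (h l) = ∏ l, ∑ x, G l x := by
    rw [Finset.prod_univ_sum, Fintype.piFinset_univ]
  have h3 : (Fintype.card (ι → α) : ℝ) = ∏ _l : ι, (Fintype.card α : ℝ) := by
    simp [Fintype.card_fun]
  unfold expUnif
  simp only [h1]
  rw [h2, h3, ← Finset.prod_div_distrib, Fintype.prod_eq_mul a b hab, ha, hb]
  intro l hl
  rw [ho l hl]
  simp [hc]

lemma expUnif_mono {Ω : Type} [Fintype Ω] {X Y : Ω → ℝ} (h : ∀ ω, X ω ≤ Y ω) :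
    expUnif X ≤ expUnif Y := by
  unfold expUnif
  gcongr
  exact h _

lemma expUnif_sum {Ω ι : Type} [Fintype Ω] (s : Finset ι) (X : ι → Ω → ℝ) :
    expUnif (fun ω => ∑ j ∈ s, X j ω) = ∑ j ∈ s, expUnif (X j) := by
  unfold expUnif
  rw [Finset.sum_comm, Finset.sum_div]

lemma expUnif_collide {n : ℕ} (i j : Fin n) (hij : j ≠ i) (c : ℝ) :
    expUnif (fun g : Fin n → Fin n => if g j = g i then c else 0) = c / n := by
  have : Nonempty (Fin n) := ⟨i⟩
  have hn : (n : ℝ) ≠ 0 := by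
    have := i.pos
    positivity
  have h1 : (fun g : Fin n → Fin n => if g j = g i then c else 0) =
      fun g => ∑ b : Fin n, (if g j = b then c else 0) * (if g i = b then (1 : ℝ) else 0) := by
    funext g
    simp [eq_comm]
  rw [h1, expUnif_sum Finset.univ
    (fun b (g : Fin n → Fin n) => (if g j = b then c else 0) * (if g i = b then (1 : ℝ) else 0))]
  have h2 : ∀ b : Fin n, expUnif (fun g : Fin n → Fin n =>
      (if g j = b then c else 0) * (if g i = b then (1 : ℝ) else 0)) = c / n * (1 / n) := by
    intro b
    rw [expUnif_pair j i hij (fun x : Fin n => if x = b then c else 0)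
      (fun x : Fin n => if x = b then (1 : ℝ) else 0)]
    simp [expUnif]
  simp only [h2]
  simp
  field_simp

lemma sqrt_sum_le {ι : Type} (s : Finset ι) (f : ι → ℝ) (hf : ∀ j, 0 ≤ f j) :
    √(∑ j ∈ s, f j) ≤ ∑ j ∈ s, √(f j) := by
  classical
  induction s using Finset.induction_on with
  | empty => simp
  | insert a s ha ih =>
    rw [Finset.sum_insert ha, Finset.sum_insert ha]
    refine le_trans ?_ (add_le_add_right ih _)
    rw [Real.sqrt_le_left (by positivity)]
    have h1 := Real.sq_sqrt (hf a)
    have h2 := Real.sq_sqrt (Finset.sum_nonneg (fun j (_ : j ∈ s) => hf j))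
    nlinarith [Real.sqrt_nonneg (f a), Real.sqrt_nonneg (∑ j ∈ s, f j),
      mul_nonneg (Real.sqrt_nonneg (f a)) (Real.sqrt_nonneg (∑ j ∈ s, f j))]

lemma sum_inv_sqrt (n : ℕ) : ∑ j ∈ Finset.range n, √(((j : ℝ) + 1)⁻¹) ≤ 2 * √n := by
  induction n with
  | zero => simp
  | succ n ih =>
    rw [Finset.sum_range_succ]
    push_cast
    have hp : 0 < √((n : ℝ) + 1) := Real.sqrt_pos.mpr (by positivity)
    have h1 := Real.sq_sqrt (show (0 : ℝ) ≤ (n : ℝ) + 1 by positivity)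
    have h2 := Real.sq_sqrt (show (0 : ℝ) ≤ (n : ℝ) by positivity)
    have h3 : √(((n : ℝ) + 1)⁻¹) ≤ 2 * √((n : ℝ) + 1) - 2 * √n := by
      rw [Real.sqrt_inv, inv_le_iff_one_le_mul₀ hp]
      nlinarith [sq_nonneg (√((n : ℝ) + 1) - √n)]
    linarith

/-- Square root of the error of a single row. -/
noncomputable def rowY {n : ℕ} (i : Fin n) (g : Fin n → Fin n) : ℝ :=
  √(∑ j ∈ Finset.univ.erase i, if g j = g i then zipf j else 0)

lemma zipf_nonneg {n : ℕ} (j : Fin n) : 0 ≤ zipf j := by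
  unfold zipf
  positivity

lemma exp_rowY {n : ℕ} (i : Fin n) : expUnif (rowY i) ≤ 2 * √n / n := by
  have h1 : ∀ g : Fin n → Fin n, rowY i g ≤
      ∑ j ∈ Finset.univ.erase i, if g j = g i then √(zipf j) else 0 := by
    intro g
    refine (sqrt_sum_le _ _ ?_).trans (le_of_eq ?_)
    · intro j
      split_ifs
      · exact zipf_nonneg j
      · exact le_rfl
    · refine Finset.sum_congr rfl fun j _ => ?_
      split_ifs <;> simp
  refine (expUnif_mono h1).trans ?_
  rw [expUnif_sum (Finset.univ.erase i)
    (fun j (g : Fin n → Fin n) => if g j = g i then √(zipf j) else 0)]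
  rw [Finset.sum_congr rfl (fun j hj => expUnif_collide i j (Finset.ne_of_mem_erase hj) _)]
  rw [← Finset.sum_div]
  gcongr
  refine (Finset.sum_le_sum_of_subset_of_nonneg (Finset.erase_subset _ _)
    (fun _ _ _ => Real.sqrt_nonneg _)).trans ?_
  refine le_trans (le_of_eq ?_) (sum_inv_sqrt n)
  exact Fin.sum_univ_eq_sum_range (fun j : ℕ => √(((j : ℝ) + 1)⁻¹)) n

/-- when the number of buckets equals the number of items (`B = n`)
and `k ≥ 2`, the expected Count-Min error on Zipfian input is `O(1/n)`. -/
theorem countMin_zipfian_B_eq_n :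
    ∃ C : ℝ, 0 < C ∧
      ∀ n k : ℕ, 2 ≤ k → ∀ i : Fin n,
        expUnif (fun h : Fin k → Fin n → Fin n => cmEst zipf h i - zipf i) ≤
          C / (n : ℝ) := by
  refine ⟨4, by norm_num, ?_⟩
  intro n k hk i
  have : Nonempty (Fin n) := ⟨i⟩
  have hn : (0 : ℝ) < n := by exact_mod_cast i.pos
  let a : Fin k := ⟨0, by omega⟩
  let b : Fin k := ⟨1, by omega⟩
  have hab : a ≠ b := by simp [a, b]
  have hle : ∀ (h : Fin k → Fin n → Fin n) (l : Fin k),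
      cmEst zipf h i - zipf i ≤ rowY i (h l) ^ 2 := by
    intro h l
    have h0 : 0 ≤ ∑ j ∈ Finset.univ.erase i, if h l j = h l i then zipf j else 0 := by
      refine Finset.sum_nonneg fun j _ => ?_
      split_ifs
      · exact zipf_nonneg j
      · exact le_rfl
    rw [rowY, Real.sq_sqrt h0]
    have h1 : cmEst zipf h i ≤ ∑ j : Fin n, if h l j = h l i then zipf j else 0 :=
      ciInf_le (Set.finite_range _).bddBelow l
    rw [← Finset.add_sum_erase _ _ (Finset.mem_univ i)] at h1
    simp only [if_true] at h1
    linarith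
  have hm : ∀ h : Fin k → Fin n → Fin n,
      cmEst zipf h i - zipf i ≤ rowY i (h a) * rowY i (h b) := by
    intro h
    have ha := hle h a
    have hb := hle h b
    have pa : 0 ≤ rowY i (h a) := Real.sqrt_nonneg _
    have pb : 0 ≤ rowY i (h b) := Real.sqrt_nonneg _
    rcases le_total (rowY i (h a)) (rowY i (h b)) with hc | hc <;> nlinarith
  refine (expUnif_mono hm).trans ?_
  rw [expUnif_pair a b hab (rowY i) (rowY i)]
  have hE := exp_rowY i
  have h0 : 0 ≤ expUnif (rowY i) := by
    unfold expUnif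
    exact div_nonneg (Finset.sum_nonneg fun _ _ => Real.sqrt_nonneg _) (by positivity)
  refine (mul_le_mul hE hE h0 (by positivity)).trans (le_of_eq ?_)
  have h2 := Real.mul_self_sqrt hn.le
  field_simp
  nlinarith
end

section
/- Let w = (w_1,...,w_n) ∈ ℝ^n and p ∈ [0,1]. Let η_1,...,η_n be {0,1}-valued random variables with Pr[η_i = 1] = p, let σ_1,...,σ_n be {−1,1}-valued random variables with Pr[σ_i = 1] = Pr[σ_i = −1] = 1/2, and suppose all 2n random variables are mutually independent. Let S = Σ_{i=1}^n w_i·η_i·σ_i. Then for every nonempty subset I ⊆ {1,...,n}, E[|S|] ≥ (1/2)·p·(1−p)^{|I|−1}·Σ_{i∈I}|w_i|. -/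
/-- Expectation of `X(η, σ)` where `η : Fin n → Bool` are i.i.d. Bernoulli(p) variables
(`true` meaning value `1`), `σ : Fin n → Bool` are i.i.d. uniform signs
(`true` meaning `+1`, `false` meaning `-1`), and all `2n` variables are mutually
independent. -/
noncomputable def bernRadExp {n : ℕ} (p : ℝ)
    (X : (Fin n → Bool) → (Fin n → Bool) → ℝ) : ℝ :=
  ∑ η : Fin n → Bool, ∑ σ : Fin n → Bool,
    ((∏ i : Fin n, if η i then p else 1 - p) / (2 ^ n : ℝ)) * X η σ

lemma sign_avg {n : ℕ} (w : Fin n → ℝ) (η : Fin n → Bool) (i : Fin n) (hi : η i = true) :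
    |w i| * 2 ^ n ≤ ∑ σ : Fin n → Bool, |∑ j : Fin n, w j * (if η j then (1 : ℝ) else 0) *
              (if σ j then (1 : ℝ) else -1)| := by
  set F : (Fin n → Bool) → ℝ := fun σ => ∑ j : Fin n, w j * (if η j then (1 : ℝ) else 0) *
              (if σ j then (1 : ℝ) else -1) with hF
  have hinv : Function.Involutive (fun σ : Fin n → Bool => Function.update σ i (!σ i)) := by
    intro σ
    simp
  have h1 : ∑ σ : Fin n → Bool, |F (Function.update σ i (!σ i))| = ∑ σ, |F σ| :=
    Equiv.sum_comp hinv.toPerm (fun σ => |F σ|)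
  have h2 : ∀ σ, 2 * |w i| ≤ |F σ| + |F (Function.update σ i (!σ i))| := by
    intro σ
    have h3 : F σ - F (Function.update σ i (!σ i)) = w i * (if σ i then 2 else -2) := by
      simp only [hF]
      rw [← Finset.sum_sub_distrib, Finset.sum_eq_single i]
      · cases h : σ i <;> simp [hi] <;> ring
      · intro j _ hj
        simp [Function.update_of_ne hj]
      · simp
    have h4 : |F σ - F (Function.update σ i (!σ i))| = 2 * |w i| := by
      rw [h3, abs_mul]
      cases σ i <;> simp [mul_comm]
    rw [← h4]
    exact abs_sub _ _
  have h5 : ∑ σ : Fin n → Bool, 2 * |w i| ≤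
      ∑ σ, (|F σ| + |F (Function.update σ i (!σ i))|) :=
    Finset.sum_le_sum fun σ _ => h2 σ
  rw [Finset.sum_add_distrib, h1] at h5
  simp at h5
  change _ ≤ ∑ σ, |F σ|
  linarith

/-- One-coordinate weight restricted to the event `η_i = 1`, `η_j = 0` for other `j ∈ I`. -/
noncomputable def gw {n : ℕ} (p : ℝ) (I : Finset (Fin n)) (i j : Fin n) (b : Bool) : ℝ :=
  if j = i then (if b then p else 0) else if j ∈ I then (if b then 0 else 1 - p)
    else (if b then p else 1 - p)

lemma gw_sum {n : ℕ} (p : ℝ) (I : Finset (Fin n)) (i : Fin n) (hi : i ∈ I) :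
    ∑ η : Fin n → Bool, ∏ j, gw p I i j (η j) = p * (1 - p) ^ (I.card - 1) := by
  have h := (Finset.prod_univ_sum (fun _ : Fin n => (Finset.univ : Finset Bool))
    (fun j b => gw p I i j b)).symm
  rw [Fintype.piFinset_univ] at h
  rw [h]
  have h1 : ∀ j, ∑ b : Bool, gw p I i j b = if j ∈ I then (if j = i then p else 1 - p) else 1 := by
    intro j
    by_cases hj : j = i
    · subst hj; simp [gw, hi]
    · by_cases hI : j ∈ I <;> simp [gw, hj, hI]
  simp only [h1]
  rw [Finset.prod_ite_mem, Finset.univ_inter, ← Finset.mul_prod_erase I _ hi]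
  rw [if_pos rfl, Finset.prod_congr rfl (g := fun _ => 1 - p), Finset.prod_const,
    Finset.card_erase_of_mem hi]
  intro j hj
  rw [if_neg (Finset.ne_of_mem_erase hj)]

lemma gw_le {n : ℕ} (w : Fin n → ℝ) (p : ℝ) (h0 : 0 ≤ p) (h1 : p ≤ 1) (I : Finset (Fin n))
    (η : Fin n → Bool) (A : ℝ) (hA : 0 ≤ A) (hw : ∀ i, η i = true → |w i| ≤ A) :
    ∑ i ∈ I, (∏ j, gw p I i j (η j)) * |w i| ≤ (∏ i : Fin n, if η i then p else 1 - p) * A := by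
  have hq : 0 ≤ 1 - p := by linarith
  have hP : 0 ≤ ∏ i : Fin n, if η i then p else 1 - p :=
    Finset.prod_nonneg fun i _ => by split_ifs <;> assumption
  by_cases hz : ∃ i ∈ I, ∏ j, gw p I i j (η j) ≠ 0
  · obtain ⟨i, hi, hne⟩ := hz
    have hne' := Finset.prod_ne_zero_iff.mp hne
    have hηi : η i = true := by
      have := hne' i (Finset.mem_univ _)
      by_contra hc
      simp [gw, hc] at this
    rw [Finset.sum_eq_single_of_mem i hi]
    · refine mul_le_mul ?_ (hw i hηi) (abs_nonneg _) hP
      refine Finset.prod_le_prod ?_ ?_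
      · intro j _
        unfold gw
        split_ifs <;> first | assumption | exact le_rfl
      · intro j _
        unfold gw
        split_ifs <;> first | assumption | exact le_rfl
    · intro k hk hki
      rw [Finset.prod_eq_zero (Finset.mem_univ i), zero_mul]
      simp [gw, hηi, hi, Ne.symm hki]
  · push Not at hz
    rw [Finset.sum_eq_zero]
    · positivity
    · intro i hi
      rw [hz i hi, zero_mul]

/-- for `S = Σ w_i η_i σ_i` with independent Bernoulli(p) `η_i` and
Rademacher `σ_i`, for every nonempty `I ⊆ [n]`,
`E[|S|] ≥ (1/2)·p·(1-p)^{|I|-1}·Σ_{i∈I}|w_i|`. -/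
theorem exp_abs_signed_bernoulli_sum_ge :
    ∀ (n : ℕ) (w : Fin n → ℝ) (p : ℝ), 0 ≤ p → p ≤ 1 →
      ∀ I : Finset (Fin n), I.Nonempty →
        (1 / 2) * p * (1 - p) ^ (I.card - 1) * (∑ i ∈ I, |w i|) ≤
          bernRadExp p (fun η σ =>
            |∑ i : Fin n, w i * (if η i then (1 : ℝ) else 0) *
              (if σ i then (1 : ℝ) else -1)|) := by
  intro n w p h0 h1 I hI
  have hq : 0 ≤ 1 - p := by linarith
  set F : (Fin n → Bool) → (Fin n → Bool) → ℝ := fun η σ =>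
            |∑ i : Fin n, w i * (if η i then (1 : ℝ) else 0) *
              (if σ i then (1 : ℝ) else -1)| with hF
  have hN : (0 : ℝ) < 2 ^ n := by positivity
  have key : p * (1 - p) ^ (I.card - 1) * (∑ i ∈ I, |w i|) ≤ bernRadExp p F := by
    calc p * (1 - p) ^ (I.card - 1) * (∑ i ∈ I, |w i|)
        = ∑ i ∈ I, (∑ η : Fin n → Bool, ∏ j, gw p I i j (η j)) * |w i| := by
          rw [Finset.mul_sum]
          exact Finset.sum_congr rfl fun i hi => by rw [gw_sum p I i hi]
      _ = ∑ η : Fin n → Bool, ∑ i ∈ I, (∏ j, gw p I i j (η j)) * |w i| := by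
          simp only [Finset.sum_mul]
          exact Finset.sum_comm
      _ ≤ ∑ η : Fin n → Bool, (∏ i : Fin n, if η i then p else 1 - p) *
            ((∑ σ, F η σ) / 2 ^ n) := by
          refine Finset.sum_le_sum fun η _ => gw_le w p h0 h1 I η _ ?_ ?_
          · exact div_nonneg (Finset.sum_nonneg fun σ _ => abs_nonneg _) hN.le
          · intro i hi
            rw [le_div_iff₀ hN]
            exact sign_avg w η i hi
      _ = bernRadExp p F := by
          unfold bernRadExp
          refine Finset.sum_congr rfl fun η _ => ?_
          rw [← Finset.mul_sum]
          ring
  have hnn : 0 ≤ p * (1 - p) ^ (I.card - 1) * (∑ i ∈ I, |w i|) := by positivity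
  linarith
end

section
/- There exists an absolute constant C > 0 such that the following holds. For every odd k ≥ 3 and all n, B ∈ ℕ with n ≥ k·B and k ≤ B, for truly random hash and sign functions h_1,...,h_k : {1,...,n} → {1,...,B} and s_1,...,s_k : {1,...,n} → {−1,1}, and for every i ∈ {1,...,n}, the Count-Sketch estimate f̃_i of the Zipfian frequency f_i = 1/i satisfies E[|f̃_i − f_i|] ≤ C/(B·√k). -/
/-- The sign `±1` encoded by a boolean. -/
def sgn (b : Bool) : ℝ := if b then 1 else -1

/-- The median of `k` real numbers (for odd `k` this is the usual median). -/
noncomputable def medianFin {k : ℕ} (v : Fin k → ℝ) : ℝ :=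
  (List.insertionSort (· ≤ ·) (List.ofFn v)).getD (k / 2) 0

/-- The `k`-row Count-Sketch estimate of item `i`:
`median_ℓ s_ℓ(i) · Σ_j 1[h_ℓ(j)=h_ℓ(i)]·s_ℓ(j)·f_j`. -/
noncomputable def csEst {n B k : ℕ} (f : Fin n → ℝ) (h : Fin k → Fin n → Fin B)
    (s : Fin k → Fin n → Bool) (i : Fin n) : ℝ :=
  medianFin (fun ℓ : Fin k =>
    sgn (s ℓ i) * ∑ j : Fin n, if h ℓ j = h ℓ i then sgn (s ℓ j) * f j else 0)

open Finset

/-- Weighted product expectation. -/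
noncomputable def wE {α : Type*} [Fintype α] (n : ℕ) (w : α → ℝ) (F : (Fin n → α) → ℝ) : ℝ :=
  ∑ a : Fin n → α, (∏ j, w (a j)) * F a

section
variable {α β : Type*} [Fintype α] [Fintype β]

lemma wE_succ (n : ℕ) (w : α → ℝ) (F : (Fin (n+1) → α) → ℝ) :
    wE (n+1) w F = ∑ x, w x * wE n w (fun b => F (Fin.cons x b)) := by
  unfold wE
  rw [← (Fin.consEquiv (fun _ : Fin (n+1) => α)).sum_comp, Fintype.sum_prod_type]
  refine Finset.sum_congr rfl fun x _ => ?_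
  rw [Finset.mul_sum]
  refine Finset.sum_congr rfl fun b _ => ?_
  simp [Fin.consEquiv, Fin.prod_univ_succ, mul_assoc]

lemma wE_zero (w : α → ℝ) (F : (Fin 0 → α) → ℝ) : wE 0 w F = F (fun j => j.elim0) := by
  unfold wE
  rw [Fintype.sum_unique]
  simp
  congr 1

lemma wE_add (n : ℕ) (w : α → ℝ) (F G : (Fin n → α) → ℝ) :
    wE n w (fun a => F a + G a) = wE n w F + wE n w G := by
  simp [wE, mul_add, Finset.sum_add_distrib]

lemma wE_mul (n : ℕ) (w : α → ℝ) (c : ℝ) (F : (Fin n → α) → ℝ) :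
    wE n w (fun a => c * F a) = c * wE n w F := by
  simp only [wE, Finset.mul_sum]
  exact Finset.sum_congr rfl fun _ _ => by ring

lemma wE_mono (n : ℕ) (w : α → ℝ) (hw : ∀ x, 0 ≤ w x) (F G : (Fin n → α) → ℝ)
    (h : ∀ a, F a ≤ G a) : wE n w F ≤ wE n w G := by
  unfold wE
  exact Finset.sum_le_sum fun a _ =>
    mul_le_mul_of_nonneg_left (h a) (Finset.prod_nonneg fun _ _ => hw _)

lemma wE_const (n : ℕ) (w : α → ℝ) (hw1 : ∑ x, w x = 1) (c : ℝ) :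
    wE n w (fun _ => c) = c := by
  induction n with
  | zero => rw [wE_zero]
  | succ n ih => rw [wE_succ]; simp only [ih]; rw [← Finset.sum_mul, hw1, one_mul]

lemma wE_lin (n : ℕ) (w : α → ℝ) (hw1 : ∑ x, w x = 1) (φ : α → ℝ) (c : Fin n → ℝ) :
    wE n w (fun a => ∑ j, φ (a j) * c j) = (∑ x, w x * φ x) * ∑ j, c j := by
  induction n with
  | zero => rw [wE_zero]; simp
  | succ n ih =>
    rw [wE_succ]
    simp only [Fin.sum_univ_succ, Fin.cons_zero, Fin.cons_succ]
    simp only [wE_add, wE_const n w hw1, ih]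
    simp only [mul_add, Finset.sum_add_distrib]
    rw [← Finset.sum_mul, hw1, one_mul]
    congr 1
    rw [Finset.sum_mul]
    exact Finset.sum_congr rfl fun _ _ => by ring

lemma wE_sq (n : ℕ) (w : α → ℝ) (hw1 : ∑ x, w x = 1) (φ : α → ℝ)
    (h0 : ∑ x, w x * φ x = 0) (c : Fin n → ℝ) :
    wE n w (fun a => (∑ j, φ (a j) * c j)^2) = (∑ x, w x * φ x ^2) * ∑ j, c j ^2 := by
  induction n with
  | zero => rw [wE_zero]; simp
  | succ n ih =>
    rw [wE_succ]
    simp only [Fin.sum_univ_succ, Fin.cons_zero, Fin.cons_succ]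
    have : ∀ x, wE n w (fun b => (φ x * c 0 + ∑ i : Fin n, φ (b i) * c i.succ)^2)
        = φ x ^2 * c 0 ^2 + (∑ x, w x * φ x ^2) * ∑ j : Fin n, c j.succ ^2 := by
      intro x
      have e : (fun b : Fin n → α => (φ x * c 0 + ∑ i : Fin n, φ (b i) * c i.succ)^2)
        = fun b => ((φ x ^2 * c 0 ^2) + (2 * φ x * c 0) * ∑ i : Fin n, φ (b i) * c i.succ)
            + (∑ i : Fin n, φ (b i) * c i.succ)^2 := by
        funext b; ring
      rw [e, wE_add, wE_add, wE_const n w hw1, wE_mul, ih, wE_lin n w hw1, h0]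
      ring
    simp only [this, mul_add, Finset.sum_add_distrib]
    rw [← Finset.sum_mul, hw1, one_mul]
    congr 1
    rw [Finset.sum_mul]
    exact Finset.sum_congr rfl fun _ _ => by ring

lemma wE_transfer (n : ℕ) (w : α → ℝ) (w' : β → ℝ) (g : α → ℝ) (g' : β → ℝ)
    (h : ∀ φ : ℝ → ℝ, ∑ x, w x * φ (g x) = ∑ y, w' y * φ (g' y)) (f : Fin n → ℝ) (G : ℝ → ℝ) :
    wE n w (fun a => G (∑ j, g (a j) * f j)) = wE n w' (fun a => G (∑ j, g' (a j) * f j)) := by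
  induction n generalizing G with
  | zero => rw [wE_zero, wE_zero]; simp
  | succ n ih =>
    rw [wE_succ, wE_succ]
    simp only [Fin.sum_univ_succ, Fin.cons_zero, Fin.cons_succ]
    have : ∀ y : ℝ, wE n w (fun b => G (y * f 0 + ∑ j : Fin n, g (b j) * f j.succ))
        = wE n w' (fun b => G (y * f 0 + ∑ j : Fin n, g' (b j) * f j.succ)) := fun y =>
      ih (fun j => f j.succ) (fun z => G (y * f 0 + z))
    simp only [this]
    exact h (fun y => wE n w' (fun b => G (y * f 0 + ∑ j : Fin n, g' (b j) * f j.succ)))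

open Classical in
lemma wE_tail (n : ℕ) (w : α → ℝ) (hw : ∀ x, 0 ≤ w x) (hw1 : ∑ x, w x = 1) (g : α → ℝ)
    (m q : ℝ) (hm : ∑ x, w x * (g x - m) = 0)
    (hv : ∑ x, w x * (g x - m)^2 ≤ q) (hz : ∑ x, w x * (if g x = 0 then 0 else 1) ≤ q)
    (f : Fin n → ℝ) (hf : ∀ j, 0 ≤ f j) (τ : ℝ) (hτ : 0 < τ) :
    ∃ μ : ℝ, (m = 0 → μ = 0) ∧ wE n w (fun a => if |∑ j, g (a j) * f j - μ| ≤ τ then 0 else 1)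
      ≤ q / τ^2 * ∑ j, min (τ^2) (f j ^2) := by
  set f1 : Fin n → ℝ := fun j => if f j ≤ τ then f j else 0 with hf1
  set f2 : Fin n → ℝ := fun j => if f j ≤ τ then 0 else 1 with hf2
  refine ⟨m * ∑ j, f1 j, fun h => by simp [h], ?_⟩
  have hle : wE n w (fun a => if |∑ j, g (a j) * f j - m * ∑ j, f1 j| ≤ τ then 0 else 1) ≤
      wE n w (fun a => (∑ j, (if g (a j) = 0 then 0 else 1) * f2 j)
        + (1/τ^2) * (∑ j, (g (a j) - m) * f1 j)^2) := by
    apply wE_mono n w hw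
    intro a
    have hn1 : 0 ≤ (∑ j, (if g (a j) = 0 then (0:ℝ) else 1) * f2 j) := by
      apply Finset.sum_nonneg; intro j _
      simp only [hf2]; split_ifs <;> simp
    have hn2 : 0 ≤ (1/τ^2) * (∑ j, (g (a j) - m) * f1 j)^2 := by positivity
    split_ifs with hc
    · linarith
    · by_cases hall : ∀ j, ¬ f j ≤ τ → g (a j) = 0
      · have e : ∑ j, g (a j) * f j - m * ∑ j, f1 j = ∑ j, (g (a j) - m) * f1 j := by
          rw [Finset.mul_sum, ← Finset.sum_sub_distrib]
          refine Finset.sum_congr rfl fun j _ => ?_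
          simp only [hf1]
          split_ifs with h
          · ring
          · rw [hall j h]; ring
        rw [e] at hc
        push Not at hc
        have : 1 ≤ (1/τ^2) * (∑ j, (g (a j) - m) * f1 j)^2 := by
          rw [one_div, ← sq_abs (∑ j, (g (a j) - m) * f1 j), inv_mul_eq_div, le_div_iff₀ (by positivity)]
          nlinarith
        linarith
      · push Not at hall
        obtain ⟨j, hj1, hj2⟩ := hall
        have : (1:ℝ) ≤ (∑ j, (if g (a j) = 0 then (0:ℝ) else 1) * f2 j) := by
          have := Finset.single_le_sum (f := fun j => (if g (a j) = 0 then (0:ℝ) else 1) * f2 j)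
            (fun j _ => by simp only [hf2]; split_ifs <;> simp) (Finset.mem_univ j)
          simp only [hf2] at this ⊢
          rw [if_neg hj2, if_neg (not_le.2 hj1)] at this
          simpa using this
        linarith
  refine hle.trans ?_
  rw [wE_add, wE_mul, wE_lin n w hw1 (fun x => if g x = 0 then 0 else 1), wE_sq n w hw1 (fun x => g x - m) hm]
  have h2 : 0 ≤ ∑ j, f2 j := Finset.sum_nonneg fun j _ => by simp only [hf2]; split_ifs <;> simp
  have h1 : 0 ≤ ∑ j, f1 j ^2 := Finset.sum_nonneg fun j _ => by positivity
  have e : ∑ j, min (τ^2) (f j ^2) = τ^2 * ∑ j, f2 j + ∑ j, f1 j^2 := by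
    rw [Finset.mul_sum, ← Finset.sum_add_distrib]
    refine Finset.sum_congr rfl fun j _ => ?_
    simp only [hf1, hf2]
    split_ifs with h
    · rw [min_eq_right (by nlinarith [hf j])]; ring
    · rw [min_eq_left (by nlinarith [hf j])]; ring
  rw [e]
  have := mul_le_mul_of_nonneg_right hz h2
  have h3 := mul_le_mul_of_nonneg_left (mul_le_mul_of_nonneg_right hv h1) (by positivity : 0 ≤ 1/τ^2)
  calc _ ≤ _ := add_le_add this h3
    _ = _ := by field_simp
end

lemma sum_min_le (n : ℕ) (t : ℝ) (ht : 0 < t) :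
    ∑ j : Fin n, min (t^2) ((zipf j)^2) ≤ 4 * t := by
  have key : ∀ n : ℕ, ∑ j ∈ range n, min (t^2) ((((j:ℝ)+1)⁻¹)^2) ≤ 4 * (t - 1/(1/t + n)) := by
    intro n
    induction n with
    | zero => simp
    | succ n ih =>
      rw [Finset.sum_range_succ]
      have hT : 0 < 1/t := by positivity
      set T := 1/t with hTd
      have htT : t = 1/T := by rw [hTd]; simp
      have hn : (0:ℝ) ≤ n := Nat.cast_nonneg n
      have : min (t^2) ((((n:ℝ)+1)⁻¹)^2) ≤ 4 * (1/(T+n) - 1/(T+(n+1:ℕ))) := by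
        have e : 1/(T+n) - 1/(T+(n+1:ℕ)) = 1/((T+n)*(T+n+1)) := by
          push_cast; field_simp; ring
        rw [e]
        rcases le_total T (n+1) with h | h
        · refine (min_le_right _ _).trans ?_
          rw [inv_pow, ← one_div, mul_one_div, div_le_div_iff₀ (by positivity) (by positivity)]
          nlinarith
        · refine (min_le_left _ _).trans ?_
          rw [htT, div_pow, one_pow, mul_one_div, div_le_div_iff₀ (by positivity) (by positivity)]
          nlinarith
      linarith
  have := key n
  rw [Finset.sum_range] at this
  refine this.trans ?_
  have : 0 ≤ 1/(1/t+(n:ℝ)) := by positivity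
  linarith

/-- Parameter with `p(1-p) = 1/(2B)`. -/
noncomputable def pB (B : ℕ) : ℝ := (1 - Real.sqrt (1 - 2/(B:ℝ)))/2

lemma pB_spec (B : ℕ) (hB : 3 ≤ B) : 0 ≤ pB B ∧ pB B ≤ 1/2 ∧ pB B * (1 - pB B) = 1/(2*B) ∧
    pB B ≤ 1/B := by
  have hB' : (3:ℝ) ≤ B := by exact_mod_cast hB
  have h1 : 0 ≤ 1 - 2/(B:ℝ) := by
    rw [sub_nonneg, div_le_one (by linarith)]; linarith
  have hs := Real.sq_sqrt h1
  have hs0 := Real.sqrt_nonneg (1 - 2/(B:ℝ))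
  have hB2 : 0 < 2/(B:ℝ) := by positivity
  have hs1 : Real.sqrt (1 - 2/(B:ℝ)) ≤ 1 := by
    rw [Real.sqrt_le_left (by norm_num)]; linarith
  have e : pB B * (1 - pB B) = 1/(2*B) := by
    unfold pB
    have : (1 - Real.sqrt (1 - 2/(B:ℝ)))/2 * (1 - (1 - Real.sqrt (1 - 2/(B:ℝ)))/2)
      = (1 - Real.sqrt (1 - 2/(B:ℝ))^2)/4 := by ring
    rw [this, hs]; field_simp; ring
  have h0 : 0 ≤ pB B := by unfold pB; linarith
  have h2 : pB B ≤ 1/2 := by unfold pB; linarith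
  refine ⟨h0, h2, e, ?_⟩
  have e2 : (1:ℝ)/(2*B) = 1/B/2 := by field_simp
  rw [e2] at e
  nlinarith

noncomputable def wb (B : ℕ) (b : Bool) : ℝ := if b then pB B else 1 - pB B
noncomputable def wbb (B : ℕ) (b : Bool × Bool) : ℝ := wb B b.1 * wb B b.2
def chi (b : Bool) : ℝ := if b then 1 else 0
def gbb (b : Bool × Bool) : ℝ := chi b.1 - chi b.2

lemma wb_nonneg (B : ℕ) (hB : 3 ≤ B) (b) : 0 ≤ wb B b := by
  obtain ⟨h1, h2, -, -⟩ := pB_spec B hB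
  unfold wb; split_ifs <;> linarith
lemma wb_sum (B : ℕ) : ∑ b, wb B b = 1 := by simp [wb]
lemma wbb_nonneg (B : ℕ) (hB : 3 ≤ B) (b) : 0 ≤ wbb B b :=
  mul_nonneg (wb_nonneg B hB _) (wb_nonneg B hB _)
lemma wbb_sum (B : ℕ) : ∑ b, wbb B b = 1 := by
  simp [wbb, wb, Fintype.sum_prod_type]; ring

lemma sum_f_le (n : ℕ) (f : Fin n → ℝ) (hf : ∀ j, 0 ≤ f j) (hfz : ∀ j, f j ≤ zipf j)
    (t : ℝ) (ht : 0 < t) : ∑ j : Fin n, min (t^2) ((f j)^2) ≤ 4 * t :=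
  (Finset.sum_le_sum fun j _ => min_le_min le_rfl
    (pow_le_pow_left₀ (hf j) (hfz j) 2)).trans (sum_min_le n t ht)

open Classical in
/-- `rho = P(|X| ≤ t)`. -/
noncomputable def rho (n B : ℕ) (f : Fin n → ℝ) (t : ℝ) : ℝ :=
  wE n (wbb B) (fun a => if |∑ j, gbb (a j) * f j| ≤ t then 1 else 0)

open Classical in
lemma rho_tail (n B : ℕ) (hB : 3 ≤ B) (f : Fin n → ℝ) (hf : ∀ j, 0 ≤ f j)
    (hfz : ∀ j, f j ≤ zipf j) (t : ℝ) (ht : 0 < t) : 1 - rho n B f t ≤ 4/(t*B) := by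
  obtain ⟨h1, h2, h3, h4⟩ := pB_spec B hB
  have hB' : (3:ℝ) ≤ B := by exact_mod_cast hB
  have e2 : (1:ℝ)/(2*B) = 1/B/2 := by field_simp
  rw [e2] at h3
  obtain ⟨μ, hμ, h⟩ := wE_tail n (wbb B) (wbb_nonneg B hB) (wbb_sum B) gbb 0 (1/B)
    (by simp [wbb, wb, gbb, chi, Fintype.sum_prod_type]; ring)
    (by simp [wbb, wb, gbb, chi, Fintype.sum_prod_type]; rw [← one_div]; linarith)
    (by simp [wbb, wb, gbb, chi, Fintype.sum_prod_type]; rw [← one_div]; linarith) f hf t ht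
  rw [hμ rfl] at h
  have e : 1 - rho n B f t = wE n (wbb B) (fun a => if |∑ j, gbb (a j) * f j - 0| ≤ t then 0 else 1) := by
    have := wE_const n (wbb B) (wbb_sum B) 1
    rw [sub_eq_iff_eq_add, rho, ← wE_add]
    refine this.symm.trans ?_
    congr 1; funext a; rw [sub_zero]; split_ifs <;> simp
  rw [e]
  refine h.trans ?_
  calc 1/(B:ℝ)/t^2 * _ ≤ 1/(B:ℝ)/t^2 * (4*t) :=
        mul_le_mul_of_nonneg_left (sum_f_le n f hf hfz t ht) (by positivity)
    _ = _ := by field_simp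

open Classical in
lemma rho_small (n B : ℕ) (hB : 3 ≤ B) (f : Fin n → ℝ) (hf : ∀ j, 0 ≤ f j)
    (hfz : ∀ j, f j ≤ zipf j) (t : ℝ) (ht : 0 < t) (htB : t * B ≤ 1) :
    (1/72) * (t*B) ≤ rho n B f t := by
  obtain ⟨h1, h2, h3, h4⟩ := pB_spec B hB
  have hB' : (3:ℝ) ≤ B := by exact_mod_cast hB
  have hBp : (0:ℝ) < B := by linarith
  set τ : ℝ := 8/B with hτ
  have hτ0 : 0 < τ := by positivity
  obtain ⟨μ, -, h⟩ := wE_tail n (wb B) (wb_nonneg B hB) (wb_sum B) chi (pB B) (1/B)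
    (by simp [wb, chi]; ring)
    (by simp [wb, chi]; rw [← one_div]; nlinarith)
    (by simp [wb, chi]; rw [← one_div]; linarith) f hf τ hτ0
  have h' : wE n (wb B) (fun a => if |∑ j, chi (a j) * f j - μ| ≤ τ then 0 else 1) ≤ 1/2 := by
    refine h.trans ?_
    calc 1/(B:ℝ)/τ^2 * _ ≤ 1/(B:ℝ)/τ^2 * (4*τ) :=
          mul_le_mul_of_nonneg_left (sum_f_le n f hf hfz τ hτ0) (by positivity)
      _ = 1/2 := by rw [hτ]; field_simp; norm_num
  have hin : 1/2 ≤ wE n (wb B) (fun a => if |∑ j, chi (a j) * f j - μ| ≤ τ then 1 else 0) := by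
    have e := wE_const n (wb B) (wb_sum B) 1
    have : wE n (wb B) (fun a => if |∑ j, chi (a j) * f j - μ| ≤ τ then 1 else 0)
       + wE n (wb B) (fun a => if |∑ j, chi (a j) * f j - μ| ≤ τ then 0 else 1) = 1 := by
      rw [← wE_add]
      refine Eq.trans ?_ e
      congr 1; funext a; split_ifs <;> simp
    linarith
  -- bins
  set U : (Fin n → Bool) → ℝ := fun a => ∑ j, chi (a j) * f j with hU
  set W : (Fin n → Bool) → ℝ := fun a => ∏ j, wb B (a j) with hW
  have hW0 : ∀ a, 0 ≤ W a := fun a => Finset.prod_nonneg fun _ _ => wb_nonneg B hB _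
  set bin : (Fin n → Bool) → ℕ := fun a => ⌊(U a - μ + τ)/t⌋₊ with hbin
  set M : ℕ := ⌊2*τ/t⌋₊ + 1 with hM
  have hrho : rho n B f t = ∑ u, ∑ v, W u * W v * (if |U u - U v| ≤ t then 1 else 0) := by
    unfold rho wE
    rw [← (Equiv.arrowProdEquivProdArrow (Fin n) (fun _ => Bool) (fun _ => Bool)).symm.sum_comp, Fintype.sum_prod_type]
    refine Finset.sum_congr rfl fun u _ => Finset.sum_congr rfl fun v _ => ?_
    simp [Equiv.arrowProdEquivProdArrow, wbb, gbb, hW, hU, Finset.prod_mul_distrib, sub_mul,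
      Finset.sum_sub_distrib]
  set P : ℕ → ℝ := fun b => ∑ u, W u * (if |U u - μ| ≤ τ ∧ bin u = b then 1 else 0) with hP
  have hsumP : 1/2 ≤ ∑ b ∈ range M, P b := by
    refine hin.trans (le_of_eq ?_)
    simp only [hP, wE]
    rw [Finset.sum_comm]
    refine Finset.sum_congr rfl fun u _ => ?_
    rw [← Finset.mul_sum]
    congr 1
    by_cases hc : |U u - μ| ≤ τ
    · have hmem : bin u ∈ range M := by
        rw [Finset.mem_range, hM, Nat.lt_succ_iff]
        apply Nat.floor_le_floor
        have := (abs_le.1 hc).2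
        gcongr
        linarith
      simp only [hc, true_and]
      rw [Finset.sum_ite_eq]
      simp [hmem]
      exact hc
    · simp [hc]
      exact lt_of_not_ge hc
  have hlow : ∑ b ∈ range M, P b ^2 ≤ rho n B f t := by
    rw [hrho]
    have : ∀ b, P b ^2 = ∑ u, ∑ v, W u * W v * ((if |U u - μ| ≤ τ ∧ bin u = b then 1 else 0) *
      (if |U v - μ| ≤ τ ∧ bin v = b then 1 else 0)) := by
      intro b
      rw [sq, hP, Finset.sum_mul_sum]
      exact Finset.sum_congr rfl fun u _ => Finset.sum_congr rfl fun v _ => by ring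
    simp only [this]
    rw [Finset.sum_comm]
    refine Finset.sum_le_sum fun u _ => ?_
    rw [Finset.sum_comm]
    refine Finset.sum_le_sum fun v _ => ?_
    rw [← Finset.mul_sum]
    refine mul_le_mul_of_nonneg_left ?_ (mul_nonneg (hW0 u) (hW0 v))
    by_cases hc : |U u - μ| ≤ τ ∧ |U v - μ| ≤ τ ∧ bin u = bin v
    · obtain ⟨c1, c2, c3⟩ := hc
      have a1 := abs_le.1 c1
      have a2 := abs_le.1 c2
      have b1 : 0 ≤ (U u - μ + τ)/t := div_nonneg (by linarith) ht.le
      have b2 : 0 ≤ (U v - μ + τ)/t := div_nonneg (by linarith) ht.le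
      have d1 := Nat.floor_le b1
      have d2 := Nat.floor_le b2
      have d3 := Nat.lt_floor_add_one ((U u - μ + τ)/t)
      have d4 := Nat.lt_floor_add_one ((U v - μ + τ)/t)
      have c3' : ⌊(U u - μ + τ)/t⌋₊ = ⌊(U v - μ + τ)/t⌋₊ := c3
      rw [c3'] at d1 d3
      have : |(U u - μ + τ)/t - (U v - μ + τ)/t| ≤ 1 := by
        rw [abs_le]; constructor <;> linarith
      have e : (U u - μ + τ)/t - (U v - μ + τ)/t = (U u - U v)/t := by ring
      rw [e, abs_div, abs_of_pos ht, div_le_one ht] at this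
      rw [if_pos this]
      simp only [c1, c2, true_and, c3]
      calc _ = ∑ b ∈ range M, (if bin v = b then (1:ℝ) else 0) :=
            Finset.sum_congr rfl fun b _ => by split_ifs <;> simp
        _ ≤ 1 := by rw [Finset.sum_ite_eq]; split_ifs <;> simp
    · have : ∑ b ∈ range M, ((if |U u - μ| ≤ τ ∧ bin u = b then (1:ℝ) else 0) *
        (if |U v - μ| ≤ τ ∧ bin v = b then 1 else 0)) = 0 := by
        refine Finset.sum_eq_zero fun b _ => ?_
        split_ifs with q1 q2
        · exact absurd ⟨q1.1, q2.1, q1.2.trans q2.2.symm⟩ hc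
        all_goals simp
      rw [this]; split_ifs <;> simp
  have hcs := sq_sum_le_card_mul_sum_sq (s := range M) (f := P)
  rw [Finset.card_range] at hcs
  have hMle : (M:ℝ) * (t * B) ≤ 18 := by
    have : (M:ℝ) ≤ 2*τ/t + 1 := by
      rw [hM]; push_cast
      have := Nat.floor_le (by positivity : 0 ≤ 2*τ/t)
      linarith
    calc (M:ℝ) * (t * B) ≤ (2*τ/t + 1) * (t*B) := by gcongr
      _ = 16 + t * B := by rw [hτ]; field_simp; ring
      _ ≤ 18 := by linarith
  have hq : (1/4:ℝ) ≤ (∑ b ∈ range M, P b)^2 := by nlinarith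
  have hr : 1/4 ≤ M * rho n B f t := hq.trans (hcs.trans (by gcongr))
  have hr0 : 0 ≤ rho n B f t := le_trans (Finset.sum_nonneg fun b _ => sq_nonneg _) hlow
  have htB0 : 0 < t * B := by positivity
  nlinarith [mul_le_mul_of_nonneg_right hr htB0.le, mul_le_mul_of_nonneg_right hMle hr0]
open Classical in
lemma rho_nonneg (n B : ℕ) (hB : 3 ≤ B) (f : Fin n → ℝ) (t : ℝ) : 0 ≤ rho n B f t := by
  have := wE_const n (wbb B) (wbb_sum B) 0
  rw [← this]
  exact wE_mono n _ (wbb_nonneg B hB) _ _ fun a => by split_ifs <;> simp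

open Classical in
lemma rho_le_one (n B : ℕ) (hB : 3 ≤ B) (f : Fin n → ℝ) (t : ℝ) : rho n B f t ≤ 1 := by
  have := wE_const n (wbb B) (wbb_sum B) 1
  refine le_trans ?_ this.le
  exact wE_mono n _ (wbb_nonneg B hB) _ _ fun a => by split_ifs <;> simp

open Classical in
lemma rho_mono (n B : ℕ) (hB : 3 ≤ B) (f : Fin n → ℝ) (s t : ℝ) (h : s ≤ t) :
    rho n B f s ≤ rho n B f t := by
  refine wE_mono n _ (wbb_nonneg B hB) _ _ fun a => ?_
  split_ifs with h1 h2
  · exact le_rfl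
  · exact absurd (h1.trans h) h2
  · exact zero_le_one
  · exact le_rfl

lemma sum_update {ι α : Type*} [Fintype ι] [DecidableEq ι] [Fintype α] (i : ι) (F : (ι → α) → ℝ) :
    (Fintype.card α : ℝ) * ∑ a, F a = ∑ c, ∑ a, F (Function.update a i c) := by
  rw [Finset.sum_comm, ← Fintype.sum_prod_type' (f := fun a c => F (Function.update a i c))]
  let e : (ι → α) × α ≃ (ι → α) × α :=
    { toFun := fun x => (Function.update x.1 i x.2, x.1 i)
      invFun := fun x => (Function.update x.1 i x.2, x.1 i)
      left_inv := fun x => by simp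
      right_inv := fun x => by simp }
  have := e.sum_comp (fun x => F x.1)
  rw [show (∑ x : (ι → α) × α, F (Function.update x.1 i x.2)) = ∑ x, F (e x).1 from rfl, this,
    Fintype.sum_prod_type]
  simp [Finset.mul_sum]

/-- Row error. -/
noncomputable def rowX {n B : ℕ} (f : Fin n → ℝ) (i : Fin n) (a : Fin n → Fin B × Bool) : ℝ :=
  ∑ j, (if (a j).1 = (a i).1 then sgn (a i).2 * sgn (a j).2 else 0) * f j

lemma coord_law (B : ℕ) (hB : 3 ≤ B) (c : Fin B × Bool) (φ : ℝ → ℝ) :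
    ∑ x : Fin B × Bool, (1/(2*B:ℝ)) * φ (if x.1 = c.1 then sgn c.2 * sgn x.2 else 0)
      = ∑ y, wbb B y * φ (gbb y) := by
  obtain ⟨h1, h2, h3, h4⟩ := pB_spec B hB
  have hB' : (3:ℝ) ≤ B := by exact_mod_cast hB
  rw [Fintype.sum_prod_type]
  have : ∀ b : Fin B, ∑ s : Bool, (1/(2*B:ℝ)) * φ (if b = c.1 then sgn c.2 * sgn s else 0)
      = (1/(2*B:ℝ)) * (2 * φ 0) + (if b = c.1 then (1/(2*B:ℝ)) * (φ 1 + φ (-1) - 2 * φ 0) else 0) := by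
    intro b
    split_ifs with h
    · cases c.2 <;> simp [sgn] <;> ring
    · simp; ring
  simp only [this, Finset.sum_add_distrib, Finset.sum_ite_eq', Finset.mem_univ, if_true]
  rw [← h3]
  simp only [wbb, wb, gbb, chi, Fintype.sum_prod_type, Fintype.univ_bool]
  simp
  have h5 : (B:ℝ) * (pB B * (1 - pB B)) = 1/2 := by rw [h3]; field_simp
  linear_combination (2 * φ 0) * h5

lemma row_law (n B : ℕ) (hB : 3 ≤ B) (f : Fin n → ℝ) (i : Fin n) (hi : f i = 0) (G : ℝ → ℝ) :
    ∑ a : Fin n → Fin B × Bool, G (rowX f i a)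
      = (2*B:ℝ)^n * wE n (wbb B) (fun a => G (∑ j, gbb (a j) * f j)) := by
  have hB' : (3:ℝ) ≤ B := by exact_mod_cast hB
  have h := sum_update i (fun a : Fin n → Fin B × Bool => G (rowX f i a))
  have hc : ∀ c : Fin B × Bool, ∑ a : Fin n → Fin B × Bool, G (rowX f i (Function.update a i c))
      = (2*B:ℝ)^n * wE n (wbb B) (fun a => G (∑ j, gbb (a j) * f j)) := by
    intro c
    rw [← wE_transfer n (fun _ : Fin B × Bool => 1/(2*B:ℝ)) (wbb B)
      (fun x => if x.1 = c.1 then sgn c.2 * sgn x.2 else 0) gbb (coord_law B hB c)]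
    unfold wE
    rw [Finset.mul_sum]
    refine Finset.sum_congr rfl fun a _ => ?_
    simp only [Finset.prod_const, Finset.card_univ, Fintype.card_fin]
    rw [← mul_assoc, ← mul_pow, mul_one_div_cancel (by positivity), one_pow, one_mul]
    congr 1
    unfold rowX
    refine Finset.sum_congr rfl fun j _ => ?_
    by_cases hj : j = i
    · subst hj; simp [hi]
    · simp [Function.update_of_ne hj]
  simp only [hc] at h
  rw [Finset.sum_const, Finset.card_univ, nsmul_eq_mul] at h
  have hne : (Fintype.card (Fin B × Bool) : ℝ) ≠ 0 := by
    simp; omega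
  exact mul_left_cancel₀ hne h

open Classical in
lemma row_prob (n B : ℕ) (hB : 3 ≤ B) (f : Fin n → ℝ) (i : Fin n) (hi : f i = 0) (t : ℝ)
    (ht : 0 ≤ t) :
    (∑ a : Fin n → Fin B × Bool, (if t < rowX f i a then (1:ℝ) else 0)
      = (2*B:ℝ)^n * ((1 - rho n B f t)/2)) ∧
    (∑ a : Fin n → Fin B × Bool, (if rowX f i a < -t then (1:ℝ) else 0)
      = (2*B:ℝ)^n * ((1 - rho n B f t)/2)) := by
  rw [row_law n B hB f i hi (fun x => if t < x then 1 else 0),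
    row_law n B hB f i hi (fun x => if x < -t then 1 else 0)]
  have hs : wE n (wbb B) (fun a => (fun x => if t < x then (1:ℝ) else 0) (∑ j, gbb (a j) * f j))
     = wE n (wbb B) (fun a => (fun x => if t < x then (1:ℝ) else 0) (∑ j, (-gbb (a j)) * f j)) :=
    wE_transfer n (wbb B) (wbb B) gbb (fun x => -gbb x) (by
      intro φ
      simp [wbb, wb, gbb, chi, Fintype.sum_prod_type]; ring) f
      (fun x => if t < x then (1:ℝ) else 0)
  have hs2 : wE n (wbb B) (fun a => if t < ∑ j, gbb (a j) * f j then (1:ℝ) else 0)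
     = wE n (wbb B) (fun a => if ∑ j, gbb (a j) * f j < -t then (1:ℝ) else 0) := by
    refine hs.trans ?_
    congr 1; funext a
    simp only [neg_mul, Finset.sum_neg_distrib]
    congr 1
    exact propext ⟨fun h => by linarith, fun h => by linarith⟩
  have htot : wE n (wbb B) (fun a => if t < ∑ j, gbb (a j) * f j then (1:ℝ) else 0)
     + wE n (wbb B) (fun a => if ∑ j, gbb (a j) * f j < -t then (1:ℝ) else 0)
     + rho n B f t = 1 := by
    rw [rho, ← wE_add, ← wE_add]
    refine Eq.trans ?_ (wE_const n (wbb B) (wbb_sum B) 1)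
    congr 1; funext a
    set x := ∑ j, gbb (a j) * f j
    by_cases h1 : t < x
    · have h2 : ¬ x < -t := by linarith
      have h3 : ¬ |x| ≤ t := by rw [abs_le]; intro h; linarith [h.2]
      simp [h1, h2, h3]
    · by_cases h2 : x < -t
      · have h3 : ¬ |x| ≤ t := by rw [abs_le]; intro h; linarith [h.1]
        simp [h1, h2, h3]
      · have h3 : |x| ≤ t := by rw [abs_le]; constructor <;> linarith
        simp [h1, h2, h3]
  constructor
  · congr 1; linarith
  · congr 1; linarith

open Classical in
lemma chernoff {R : Type*} [Fintype R] (N : ℝ) (hN : (Fintype.card R : ℝ) = N) (k : ℕ) (hk : 0 < k)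
    (Z : R → Prop) (ρ : ℝ) (h0 : 0 ≤ ρ) (h1 : ρ ≤ 1)
    (hZ : ∑ r, (if Z r then (1:ℝ) else 0) = N * ((1 - ρ)/2)) :
    ∑ p : Fin k → R, (if k ≤ 2 * (univ.filter fun l => Z (p l)).card then (1:ℝ) else 0)
      ≤ N^k * Real.sqrt (1 - ρ^2)^k := by
  have hN0 : 0 ≤ N := by rw [← hN]; positivity
  rcases h1.eq_or_lt with h | h
  · subst h
    have hz : ∀ r, ¬ Z r := by
      intro r hr
      have := Finset.single_le_sum (f := fun r => if Z r then (1:ℝ) else 0)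
        (fun r _ => by split_ifs <;> simp) (Finset.mem_univ r)
      rw [hZ] at this
      simp [hr] at this
      linarith
    have : ∀ p : Fin k → R, (if k ≤ 2 * (univ.filter fun l => Z (p l)).card then (1:ℝ) else 0) = 0 := by
      intro p; simp [hz, hk.ne']
    simp only [this, Finset.sum_const_zero]
    positivity
  · have hb : 0 < Real.sqrt (1 - ρ) := Real.sqrt_pos.2 (by linarith)
    have ha : 0 < Real.sqrt (1 + ρ) := Real.sqrt_pos.2 (by linarith)
    have hbs := Real.sq_sqrt (by linarith : 0 ≤ 1 - ρ)
    have has := Real.sq_sqrt (by linarith : 0 ≤ 1 + ρ)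
    have hab : Real.sqrt (1 - ρ) ≤ Real.sqrt (1 + ρ) := Real.sqrt_le_sqrt (by linarith)
    have hprod : Real.sqrt (1 - ρ^2) = Real.sqrt (1+ρ) * Real.sqrt (1-ρ) := by
      rw [← Real.sqrt_mul (by linarith)]; congr 1; ring
    set α := Real.sqrt (1+ρ)
    set β := Real.sqrt (1-ρ)
    have hl : 1 ≤ α/β := by rw [le_div_iff₀ hb]; linarith
    have hpt : ∀ p : Fin k → R, (if k ≤ 2 * (univ.filter fun l => Z (p l)).card then (1:ℝ) else 0)
        ≤ ∏ l, (if Z (p l) then α/β else (α/β)⁻¹) := by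
      intro p
      split_ifs with hc
      · rw [Finset.prod_ite, Finset.prod_const, Finset.prod_const]
        have hcard := Finset.card_filter_add_card_filter_not (s := (univ : Finset (Fin k))) (fun l => Z (p l))
        rw [Finset.card_univ, Fintype.card_fin] at hcard
        rw [inv_pow, ← div_eq_mul_inv, one_le_div (by positivity)]
        exact pow_le_pow_right₀ hl (by omega)
      · apply Finset.prod_nonneg; intro l _
        split_ifs <;> positivity
    refine (Finset.sum_le_sum fun p _ => hpt p).trans ?_
    rw [← Fintype.sum_pow (fun r => if Z r then α/β else (α/β)⁻¹) k, ← mul_pow]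
    apply le_of_eq
    congr 1
    have e : ∀ r, (if Z r then α/β else (α/β)⁻¹) = (α/β)⁻¹ + (α/β - (α/β)⁻¹) * (if Z r then 1 else 0) := by
      intro r; split_ifs <;> ring
    simp only [e]
    rw [Finset.sum_add_distrib, ← Finset.mul_sum, hZ, Finset.sum_const, Finset.card_univ, nsmul_eq_mul, hN, hprod]
    have h5 : (1 - ρ) = β^2 := hbs.symm
    have h6 : ρ = α^2 - 1 := by linarith
    have h7 : α^2 + β^2 = 2 := by linarith
    rw [h5]
    field_simp
    linear_combination - N * h7

lemma count_ofFn {k : ℕ} (v : Fin k → ℝ) (P : ℝ → Prop) [DecidablePred P] :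
    (univ.filter fun l => P (v l)).card = (List.insertionSort (· ≤ ·) (List.ofFn v)).countP (fun x => decide (P x)) := by
  rw [(List.perm_insertionSort (· ≤ ·) (List.ofFn v)).countP_eq]
  rw [List.ofFn_eq_map, List.countP_map, Finset.card_def, Finset.filter_val]
  rw [← Multiset.countP_eq_card_filter]
  rfl

lemma med_gt {k : ℕ} (hk : 0 < k) (v : Fin k → ℝ) (y : ℝ) (h : y < medianFin v) :
    k ≤ 2 * (univ.filter fun l => y < v l).card := by
  rw [count_ofFn v (fun x => y < x)]
  unfold medianFin at h
  set l := List.insertionSort (· ≤ ·) (List.ofFn v) with hl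
  have hs : l.Pairwise (· ≤ ·) := List.pairwise_insertionSort (· ≤ ·) (List.ofFn v)
  have hlen : l.length = k := by simp [hl]
  have hlt : k/2 < l.length := by omega
  rw [List.getD_eq_getElem _ _ hlt] at h
  have h1 : (l.drop (k/2)).countP (fun x => decide (y < x)) = (l.drop (k/2)).length := by
    rw [List.countP_eq_length]
    intro x hx
    obtain ⟨m, hm, rfl⟩ := List.mem_iff_getElem.1 hx
    rw [List.getElem_drop]
    simp only [decide_eq_true_eq]
    refine h.trans_le ?_
    rcases Nat.eq_zero_or_pos m with rfl | hm0
    · simp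
    · exact List.pairwise_iff_getElem.1 hs _ _ _ _ (by omega)
  have h2 := (List.drop_sublist (k/2) l).countP_le (p := fun x => decide (y < x))
  rw [h1, List.length_drop, hlen] at h2
  omega

lemma med_lt {k : ℕ} (hk : 0 < k) (v : Fin k → ℝ) (y : ℝ) (h : medianFin v < y) :
    k ≤ 2 * (univ.filter fun l => v l < y).card := by
  rw [count_ofFn v (fun x => x < y)]
  unfold medianFin at h
  set l := List.insertionSort (· ≤ ·) (List.ofFn v) with hl
  have hs : l.Pairwise (· ≤ ·) := List.pairwise_insertionSort (· ≤ ·) (List.ofFn v)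
  have hlen : l.length = k := by simp [hl]
  have hlt : k/2 < l.length := by omega
  rw [List.getD_eq_getElem _ _ hlt] at h
  have h1 : (l.take (k/2+1)).countP (fun x => decide (x < y)) = (l.take (k/2+1)).length := by
    rw [List.countP_eq_length]
    intro x hx
    obtain ⟨m, hm, rfl⟩ := List.mem_iff_getElem.1 hx
    rw [List.getElem_take]
    simp only [decide_eq_true_eq]
    refine lt_of_le_of_lt ?_ h
    rw [List.length_take] at hm
    rcases Nat.lt_or_ge m (k/2) with hm0 | hm0
    · exact List.pairwise_iff_getElem.1 hs _ _ _ _ (by omega)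
    · have : m = k/2 := by omega
      simp [this]
  have h2 := (List.take_sublist (k/2+1) l).countP_le (p := fun x => decide (x < y))
  rw [h1, List.length_take, hlen] at h2
  omega

lemma analytic (ρ u : ℝ) (h0 : 0 ≤ ρ) (h1 : ρ ≤ 1) (hu : 0 < u) (c : ℝ) (hc : 0 < c) (hc1 : c ≤ 1)
    (hs : c * min u 1 ≤ ρ) (ht : 1 - ρ ≤ 4/u) :
    (1 - ρ^2)^2 * (1 + (c^2/64) * u^2) ≤ 1 := by
  have hv0 : 0 ≤ 1 - ρ^2 := by nlinarith
  rcases le_total u 1 with h | h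
  · rw [min_eq_left h] at hs
    have hcu : 0 ≤ c * u := by positivity
    have h2 : 1 - ρ^2 ≤ 1 - (c*u)^2 := by nlinarith
    have h3 : (1 - ρ^2)^2 ≤ 1 - (c*u)^2 := by nlinarith
    calc (1 - ρ^2)^2 * (1 + (c^2/64) * u^2) ≤ (1 - (c*u)^2) * (1 + (c^2/64) * u^2) := by gcongr
      _ ≤ 1 := by nlinarith [sq_nonneg (c*u), sq_nonneg ((c*u)^2)]
  · rw [min_eq_right h, mul_one] at hs
    have h2 : 1 - ρ^2 ≤ 1 - c^2 := by nlinarith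
    have h3 : (1 - ρ^2)^2 ≤ 1 - c^2 := by nlinarith [sq_nonneg c, sq_nonneg ρ]
    have h4 : (1 - ρ^2) * u ≤ 8 := by
      have : (1 - ρ) * u ≤ 4 := by rwa [le_div_iff₀ hu] at ht
      nlinarith [mul_nonneg (by linarith : 0 ≤ 1 - ρ) hu.le]
    have h5 : ((1 - ρ^2) * u)^2 ≤ 64 := by nlinarith [mul_nonneg hv0 hu.le]
    nlinarith [sq_nonneg c, mul_le_mul_of_nonneg_left h5 (sq_nonneg c)]

lemma power_bound (k : ℕ) (hk : 3 ≤ k) (v a r : ℝ) (hv : 0 ≤ v) (ha : 0 < a) (hr : 0 < r)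
    (h : v^2 * (1 + a * (r/Real.sqrt k)^2) ≤ 1) :
    Real.sqrt v ^ k ≤ (a/3)^(-(3/4:ℝ)) * r^(-(3/2:ℝ)) := by
  have hk' : (3:ℝ) ≤ k := by exact_mod_cast hk
  have hkp : (0:ℝ) < k := by linarith
  rw [div_pow, Real.sq_sqrt hkp.le] at h
  set D := 1 + a * (r^2/k) with hD
  have hD1 : 1 ≤ D := by
    have : 0 ≤ a * (r^2/k) := by positivity
    linarith
  have hDp : 0 < D := by linarith
  have hber := one_add_mul_self_le_rpow_one_add (s := a * (r^2/k)) (p := (k:ℝ)/3)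
    (by have : 0 ≤ a * (r^2/k) := by positivity
        linarith) (by linarith)
  have hb2 : a/3 * r^2 ≤ D^((k:ℝ)/3) := by
    refine le_trans ?_ hber
    have : (k:ℝ)/3 * (a * (r^2/k)) = a/3 * r^2 := by field_simp
    linarith
  have hvD : v ≤ D^(-(1/2:ℝ)) := by
    have h2 : v^2 ≤ 1/D := by rw [le_div_iff₀ hDp]; exact h
    have h3 := Real.sqrt_le_sqrt h2
    rw [Real.sqrt_sq hv, Real.sqrt_eq_rpow, one_div, Real.inv_rpow hDp.le, ← Real.rpow_neg hDp.le] at h3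
    exact h3
  calc Real.sqrt v ^ k ≤ Real.sqrt (D^(-(1/2:ℝ))) ^ k := by gcongr
    _ = (D^((k:ℝ)/3))^(-(3/4:ℝ)) := by
      rw [Real.sqrt_eq_rpow, ← Real.rpow_natCast, ← Real.rpow_mul hDp.le, ← Real.rpow_mul hDp.le,
        ← Real.rpow_mul hDp.le]
      congr 1; ring
    _ ≤ (a/3 * r^2)^(-(3/4:ℝ)) := Real.rpow_le_rpow_of_nonpos (by positivity) hb2 (by norm_num)
    _ = _ := by
      rw [Real.mul_rpow (by positivity) (by positivity), ← Real.rpow_natCast r 2, ← Real.rpow_mul hr.le]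
      congr 2; norm_num

open Classical in
lemma layer (x δ : ℝ) (hδ : 0 < δ) (R : ℕ) : min x (R * δ) ≤ δ * ∑ r ∈ range R, (if r * δ < x then (1:ℝ) else 0) := by
  induction R with
  | zero => simp
  | succ R ih =>
    rw [Finset.sum_range_succ, mul_add]
    push_cast
    split_ifs with h
    · rw [min_eq_right h.le] at ih
      have := min_le_right x (((R:ℝ)+1)*δ)
      linarith
    · push Not at h
      rw [min_eq_left h] at ih
      have := min_le_left x (((R:ℝ)+1)*δ)
      linarith

/-- Frequencies with item `i` removed. -/
noncomputable def fz {n : ℕ} (i j : Fin n) : ℝ := if j = i then 0 else zipf j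

lemma fz_nonneg {n : ℕ} (i j : Fin n) : 0 ≤ fz i j := by
  unfold fz zipf; split_ifs <;> positivity
lemma fz_le {n : ℕ} (i j : Fin n) : fz i j ≤ zipf j := by
  have : 0 ≤ zipf j := by unfold zipf; positivity
  unfold fz; split_ifs
  · exact this
  · exact le_rfl

lemma row_eq {n B : ℕ} (h : Fin n → Fin B) (s : Fin n → Bool) (i : Fin n) :
    sgn (s i) * ∑ j : Fin n, (if h j = h i then sgn (s j) * zipf j else 0)
      = zipf i + rowX (fz i) i (fun j => (h j, s j)) := by
  unfold rowX
  rw [Finset.mul_sum, ← Finset.add_sum_erase _ _ (Finset.mem_univ i),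
    ← Finset.add_sum_erase (a := i) univ (fun j => _ * fz i j) (Finset.mem_univ i)]
  have hss : sgn (s i) * sgn (s i) = 1 := by unfold sgn; split_ifs <;> norm_num
  have : fz i i = 0 := by simp [fz]
  simp only [if_true, this, mul_zero, zero_add, ← mul_assoc, hss, one_mul]
  congr 1
  refine Finset.sum_congr rfl fun j hj => ?_
  have hj' := Finset.ne_of_mem_erase hj
  simp only [fz, if_neg hj']
  split_ifs <;> ring

open Classical in
lemma tail_prob (k n B : ℕ) (hk : 3 ≤ k) (hB : 3 ≤ B) (i : Fin n) (t : ℝ) (ht : 0 ≤ t) :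
    ∑ ω : (Fin k → Fin n → Fin B) × (Fin k → Fin n → Bool),
      (if t < |csEst zipf ω.1 ω.2 i - zipf i| then (1:ℝ) else 0)
      ≤ 2 * (((2*B:ℝ)^n)^k * Real.sqrt (1 - rho n B (fz i) t ^2)^k) := by
  have hfi : fz i i = 0 := by simp [fz]
  have hN : (Fintype.card (Fin n → Fin B × Bool) : ℝ) = (2*B:ℝ)^n := by
    simp [mul_comm]
  obtain ⟨p1, p2⟩ := row_prob n B hB (fz i) i hfi t ht
  have c1 := chernoff _ hN k (by omega) (fun a => t < rowX (fz i) i a) _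
    (rho_nonneg n B hB (fz i) t) (rho_le_one n B hB (fz i) t) p1
  have c2 := chernoff _ hN k (by omega) (fun a => rowX (fz i) i a < -t) _
    (rho_nonneg n B hB (fz i) t) (rho_le_one n B hB (fz i) t) p2
  let e : (Fin k → Fin n → Fin B) × (Fin k → Fin n → Bool) ≃ (Fin k → Fin n → Fin B × Bool) :=
    { toFun := fun ω l j => (ω.1 l j, ω.2 l j)
      invFun := fun p => (fun l j => (p l j).1, fun l j => (p l j).2)
      left_inv := fun ω => rfl
      right_inv := fun p => rfl }
  rw [← e.sum_comp] at c1 c2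
  rw [two_mul]
  refine le_trans ?_ (add_le_add c1 c2)
  rw [← Finset.sum_add_distrib]
  refine Finset.sum_le_sum fun ω _ => ?_
  have hv : csEst zipf ω.1 ω.2 i = medianFin (fun l => zipf i + rowX (fz i) i (e ω l)) := by
    unfold csEst
    congr 1; funext l
    exact row_eq (ω.1 l) (ω.2 l) i
  rw [hv]
  by_cases h : t < |medianFin (fun l => zipf i + rowX (fz i) i (e ω l)) - zipf i|
  · rw [if_pos h]
    rcases lt_abs.1 h with h | h
    · have := med_gt (by omega : 0 < k) _ (zipf i + t) (by linarith)
      simp only [add_lt_add_iff_left] at this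
      rw [if_pos this]
      have : (0:ℝ) ≤ if k ≤ 2 * (univ.filter fun l => rowX (fz i) i (e ω l) < -t).card then 1 else 0 := by
        split_ifs <;> simp
      linarith
    · have := med_lt (by omega : 0 < k) _ (zipf i + -t) (by linarith)
      simp only [add_lt_add_iff_left] at this
      rw [if_pos this]
      have : (0:ℝ) ≤ if k ≤ 2 * (univ.filter fun l => t < rowX (fz i) i (e ω l)).card then 1 else 0 := by
        split_ifs <;> simp
      linarith
  · rw [if_neg h]
    apply add_nonneg <;> split_ifs <;> simp

/-- for odd `k ≥ 3` with `k·B ≤ n` and `k ≤ B`, the expected error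
of `k`-row Count-Sketch on Zipfian input is `O(1/(B·√k))`. -/
theorem countSketch_multi_row_zipfian_upper :
    ∃ C : ℝ, 0 < C ∧
      ∀ k n B : ℕ, Odd k → 3 ≤ k → k * B ≤ n → k ≤ B → ∀ i : Fin n,
        expUnif (fun ω : (Fin k → Fin n → Fin B) × (Fin k → Fin n → Bool) =>
            |csEst zipf ω.1 ω.2 i - zipf i|) ≤
          C / ((B : ℝ) * Real.sqrt (k : ℝ)) := by
  classical
  set c : ℝ := 1/72 with hc
  set a : ℝ := c^2/64 with ha
  have ha0 : 0 < a := by rw [ha, hc]; norm_num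
  set A : ℝ := (a/3)^(-(3/4:ℝ)) with hA
  have hA0 : 0 ≤ A := by positivity
  have hsum : Summable (fun r : ℕ => (r:ℝ)^(-(3/2:ℝ))) := Real.summable_nat_rpow.2 (by norm_num)
  set S : ℝ := ∑' r : ℕ, (r:ℝ)^(-(3/2:ℝ)) with hS
  have hS0 : 0 ≤ S := tsum_nonneg fun r => by positivity
  refine ⟨1 + 2 * A * S, by positivity, ?_⟩
  intro k n B _ hk _ hkB i
  have hB : 3 ≤ B := hk.trans hkB
  have hB' : (3:ℝ) ≤ B := by exact_mod_cast hB
  have hBp : (0:ℝ) < B := by linarith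
  have hkp : (0:ℝ) < k := by
    have : (3:ℝ) ≤ k := by exact_mod_cast hk
    linarith
  have hsk : 0 < Real.sqrt k := Real.sqrt_pos.2 hkp
  set δ : ℝ := 1 / (B * Real.sqrt k) with hδ
  have hδ0 : 0 < δ := by positivity
  set X : (Fin k → Fin n → Fin B) × (Fin k → Fin n → Bool) → ℝ :=
    fun ω => |csEst zipf ω.1 ω.2 i - zipf i| with hX
  set N : ℝ := ((2*B:ℝ)^n)^k with hN
  have hN0 : 0 < N := by positivity
  have hcard : (Fintype.card ((Fin k → Fin n → Fin B) × (Fin k → Fin n → Bool)) : ℝ) = N := by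
    simp [hN, mul_pow, mul_comm]
  obtain ⟨R, hR⟩ : ∃ R : ℕ, ∀ ω, X ω ≤ R * δ := by
    obtain ⟨R, hR⟩ := exists_nat_ge ((∑ ω, X ω) / δ)
    refine ⟨R, fun ω => ?_⟩
    rw [div_le_iff₀ hδ0] at hR
    exact (Finset.single_le_sum (f := X) (fun ω _ => abs_nonneg _) (Finset.mem_univ ω)).trans hR
  have hterm : ∀ r : ℕ, 0 < r → ∑ ω, (if r * δ < X ω then (1:ℝ) else 0)
      ≤ N * (2 * A * (r:ℝ)^(-(3/2:ℝ))) := by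
    intro r hr
    have hr' : (0:ℝ) < r := by exact_mod_cast hr
    have ht : 0 < r * δ := by positivity
    refine (tail_prob k n B hk hB i (r*δ) ht.le).trans ?_
    set ρ := rho n B (fz i) (r*δ) with hρ
    have hu : r * δ * B = r / Real.sqrt k := by rw [hδ]; field_simp
    have g0 := rho_nonneg n B hB (fz i) (r*δ)
    have g1 := rho_le_one n B hB (fz i) (r*δ)
    have g2 := rho_tail n B hB (fz i) (fz_nonneg i) (fz_le i) (r*δ) ht
    rw [hu] at g2
    have g3 : c * min (r / Real.sqrt k) 1 ≤ ρ := by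
      rcases le_total (r / Real.sqrt k) 1 with h | h
      · rw [min_eq_left h]
        have := rho_small n B hB (fz i) (fz_nonneg i) (fz_le i) (r*δ) ht (by rw [hu]; exact h)
        rwa [hu] at this
      · rw [min_eq_right h]
        have e1 : 1/(B:ℝ) * B = 1 := by field_simp
        have := rho_small n B hB (fz i) (fz_nonneg i) (fz_le i) (1/B) (by positivity) (by rw [e1])
        rw [e1] at this
        refine this.trans (rho_mono n B hB (fz i) _ _ ?_)
        rw [← hu] at h
        rw [div_le_iff₀ hBp]; exact h
    have g4 := analytic ρ (r / Real.sqrt k) g0 g1 (by positivity) c (by norm_num) (by norm_num) g3 g2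
    have g5 := power_bound k hk (1 - ρ^2) a r (by nlinarith) ha0 hr' g4
    calc 2 * (N * Real.sqrt (1 - ρ^2)^k) ≤ 2 * (N * (A * (r:ℝ)^(-(3/2:ℝ)))) := by gcongr
      _ = _ := by ring
  have hmain : ∑ ω, X ω ≤ δ * (N * (1 + 2 * A * S)) := by
    calc ∑ ω, X ω ≤ ∑ ω, δ * ∑ r ∈ range R, (if r * δ < X ω then (1:ℝ) else 0) := by
          refine Finset.sum_le_sum fun ω _ => ?_
          have := layer (X ω) δ hδ0 R
          rwa [min_eq_left (hR ω)] at this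
      _ = δ * ∑ r ∈ range R, ∑ ω, (if r * δ < X ω then (1:ℝ) else 0) := by
          rw [← Finset.mul_sum, Finset.sum_comm]
      _ ≤ δ * ∑ r ∈ range (R+1), ∑ ω, (if r * δ < X ω then (1:ℝ) else 0) := by
          gcongr
          omega
      _ ≤ δ * (N + ∑ r ∈ range R, N * (2 * A * ((r+1:ℕ):ℝ)^(-(3/2:ℝ)))) := by
          rw [Finset.sum_range_succ', add_comm]
          gcongr with r hr
          · rw [← hcard]
            calc _ ≤ ∑ ω : (Fin k → Fin n → Fin B) × (Fin k → Fin n → Bool), (1:ℝ) :=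
                  Finset.sum_le_sum fun ω _ => by split_ifs <;> simp
              _ = _ := by simp
          · exact hterm (r+1) (by omega)
      _ ≤ δ * (N + N * (2 * A * S)) := by
          rw [← Finset.mul_sum, ← Finset.mul_sum]
          gcongr
          have h1 := hsum.sum_le_tsum (range (R+1)) (fun r _ => by positivity)
          rw [Finset.sum_range_succ'] at h1
          have h2 : (0:ℝ) ≤ ((0:ℕ):ℝ)^(-(3/2:ℝ)) := by positivity
          linarith
      _ = _ := by ring
  unfold expUnif
  rw [hcard, div_le_iff₀ hN0]
  refine hmain.trans (le_of_eq ?_)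
  rw [hδ]; ring
end

section
/- There exists an absolute constant c > 0 such that the following holds. For every odd k ≥ 3 and all n, B ∈ ℕ with n ≥ k·B and k ≤ B, for truly random hash and sign functions h_1,...,h_k : {1,...,n} → {1,...,B} and s_1,...,s_k : {1,...,n} → {−1,1}, and for every i ∈ {1,...,n}, the Count-Sketch estimate f̃_i of the Zipfian frequency f_i = 1/i satisfies E[|f̃_i − f_i|] ≥ c/(B·√k·log k). -/
namespace CSL
open Finset

lemma sum_update {n B : ℕ} (i j : Fin n) (hij : j ≠ i) (G : (Fin n → Fin B) → ℝ) :
    ∑ h : Fin n → Fin B, G (Function.update h j (h i)) =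
      B * ∑ h : Fin n → Fin B, if h j = h i then G h else 0 := by
  classical
  rw [← Finset.sum_filter]
  have : (B : ℝ) * ∑ h ∈ univ.filter (fun h : Fin n → Fin B => h j = h i), G h
      = ∑ p ∈ (univ.filter (fun h : Fin n → Fin B => h j = h i)) ×ˢ (univ : Finset (Fin B)),
          G p.1 := by
    rw [Finset.sum_product]
    simp [Finset.mul_sum]
  rw [this]
  refine Finset.sum_nbij' (fun h => (Function.update h j (h i), h j))
    (fun p => Function.update p.1 j p.2) ?_ ?_ ?_ ?_ ?_
  · intro h _
    simp [Function.update_of_ne hij.symm]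
  · intro p _
    simp
  · intro h _
    simp
  · rintro ⟨h, b⟩ hp
    simp only [mem_product, mem_filter, mem_univ, true_and, and_true] at hp
    simp only [Function.update_of_ne hij.symm, Function.update_idem, Function.update_self,
      Prod.mk.injEq, and_true]
    rw [← hp]; simp
  · intro h _
    rfl

lemma sum_swap {n B : ℕ} (i j : Fin n) (hij : j ≠ i) (G : (Fin n → Fin B) → ℝ) :
    ((B : ℝ) - 1) * ∑ h : Fin n → Fin B, (if h j = h i then G h else 0) =
      ∑ h : Fin n → Fin B, if h j ≠ h i then G (Function.update h j (h i)) else 0 := by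
  have h1 := sum_update i j hij G
  have h2 : ∑ h : Fin n → Fin B, G (Function.update h j (h i)) =
      ∑ h : Fin n → Fin B, (if h j = h i then G h else 0) +
      ∑ h : Fin n → Fin B, (if h j ≠ h i then G (Function.update h j (h i)) else 0) := by
    rw [← Finset.sum_add_distrib]
    refine Finset.sum_congr rfl fun h _ => ?_
    by_cases hh : h j = h i
    · simp [hh]
      rw [← hh]; simp
    · simp [hh]
  linarith

lemma no_hit {n B : ℕ} (hB : 0 < B) (i : Fin n) (J : Finset (Fin n)) (hJ : i ∉ J) :
    ∑ h : Fin n → Fin B, (if ∀ j ∈ J, h j ≠ h i then (1:ℝ) else 0) =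
      (1 - 1 / (B:ℝ)) ^ J.card * (B:ℝ) ^ n := by
  classical
  induction J using Finset.induction_on with
  | empty => simp
  | insert a J ha ih =>
    have hai : a ≠ i := by rintro rfl; simp at hJ
    have hiJ : i ∉ J := fun h => hJ (by simp [h])
    specialize ih hiJ
    rw [card_insert_of_notMem ha, pow_succ]
    set F : (Fin n → Fin B) → ℝ := fun h => if ∀ j ∈ J, h j ≠ h i then (1:ℝ) else 0 with hF
    have h1 := sum_update i a hai F
    have h2 : ∀ h : Fin n → Fin B, F (Function.update h a (h i)) = F h := by
      intro h
      simp only [hF, Function.update_of_ne hai.symm]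
      congr 1
      apply propext
      refine forall₂_congr fun j hj => ?_
      rw [Function.update_of_ne (by rintro rfl; exact ha hj)]
    simp only [h2] at h1
    have h3 : ∑ h : Fin n → Fin B, (if ∀ j ∈ insert a J, h j ≠ h i then (1:ℝ) else 0) =
      ∑ h : Fin n → Fin B, F h - ∑ h : Fin n → Fin B, (if h a = h i then F h else 0) := by
      rw [← Finset.sum_sub_distrib]
      refine Finset.sum_congr rfl fun h _ => ?_
      by_cases hh : h a = h i
      · simp [hh]
      · simp [hh, hF]
    rw [h3]
    have hB' : (B:ℝ) ≠ 0 := by positivity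
    have h4 : ∑ h : Fin n → Fin B, (if h a = h i then F h else 0) = (1 / (B:ℝ)) * ∑ h, F h := by
      rw [h1]; field_simp
    rw [h4, ih]; ring

lemma good_bound {n B : ℕ} (hB : 2 ≤ B) (i : Fin n) (J : Finset (Fin n)) (hJ : i ∉ J)
    (P : (Fin n → Fin B) → Prop) [DecidablePred P] (N : ℝ)
    (hN : ∀ h : Fin n → Fin B,
      ((J.filter (fun j => h j ≠ h i ∧ P (Function.update h j (h i)))).card : ℝ) ≤ N) :
    ((B:ℝ) - 1) * ((J.card : ℝ) + 1) *
      ∑ h : Fin n → Fin B, (if P h ∧ ∃ j ∈ J, h j = h i then (1:ℝ) else 0)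
      ≤ N * (B * (B:ℝ) ^ n) := by
  classical
  set S : (Fin n → Fin B) → Finset (Fin n) := fun h => J.filter (fun j => h j = h i) with hS
  have hSu : ∀ h : Fin n → Fin B, ∀ j ∈ J, h j ≠ h i →
      ((S (Function.update h j (h i))).card : ℝ) = (S h).card + 1 := by
    intro h j hj hne
    have hji : j ≠ i := by rintro rfl; exact hJ hj
    have : S (Function.update h j (h i)) = insert j (S h) := by
      ext x
      simp only [hS, mem_filter, mem_insert, Function.update_of_ne hji.symm]
      by_cases hx : x = j
      · subst hx; simp [hj]
      · simp [hx]
    rw [this, card_insert_of_notMem (by simp [hS, hne])]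
    push_cast; ring
  -- main identity
  have key : ∀ (P : (Fin n → Fin B) → Prop) [DecidablePred P],
      ((B:ℝ) - 1) * ∑ h : Fin n → Fin B, (if P h ∧ ∃ j ∈ J, h j = h i then (1:ℝ) else 0) =
      ∑ h : Fin n → Fin B,
        ((J.filter (fun j => h j ≠ h i ∧ P (Function.update h j (h i)))).card : ℝ)
          * (1 / ((S h).card + 1)) := by
    intro P _
    have e1 : ∀ h : Fin n → Fin B, (if P h ∧ ∃ j ∈ J, h j = h i then (1:ℝ) else 0) =
        ∑ j ∈ J, if h j = h i then (if P h then 1 / ((S h).card : ℝ) else 0) else 0 := by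
      intro h
      rw [← Finset.sum_filter, Finset.sum_const, nsmul_eq_mul]
      change _ = ((S h).card : ℝ) * _
      by_cases hP : P h
      · by_cases hE : ∃ j ∈ J, h j = h i
        · have : (S h).Nonempty := by
            obtain ⟨j, hj, e⟩ := hE
            exact ⟨j, by simp [hS, hj, e]⟩
          have : ((S h).card : ℝ) ≠ 0 := by
            have := this.card_pos
            positivity
          simp only [hP, hE, and_self, if_true]; field_simp
        · have : S h = ∅ := by
            rw [hS]; simp only [filter_eq_empty_iff]
            intro j hj e
            exact hE ⟨j, hj, e⟩
          simp [hE, this]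
      · simp [hP]
    simp only [e1]
    rw [Finset.sum_comm, Finset.mul_sum]
    have e2 : ∀ j ∈ J, ((B:ℝ) - 1) * ∑ h : Fin n → Fin B,
        (if h j = h i then (if P h then 1 / ((S h).card : ℝ) else 0) else 0) =
        ∑ h : Fin n → Fin B, if h j ≠ h i ∧ P (Function.update h j (h i)) then
          1 / (((S h).card : ℝ) + 1) else 0 := by
      intro j hj
      have hji : j ≠ i := by rintro rfl; exact hJ hj
      rw [sum_swap i j hji]
      refine Finset.sum_congr rfl fun h _ => ?_
      by_cases hne : h j = h i
      · simp [hne]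
      · rw [hSu h j hj hne]
        simp [hne]
    rw [Finset.sum_congr rfl e2, Finset.sum_comm]
    refine Finset.sum_congr rfl fun h _ => ?_
    rw [← Finset.sum_filter, Finset.sum_const, nsmul_eq_mul]
  set Q : ℝ := ∑ h : Fin n → Fin B, 1 / (((S h).card : ℝ) + 1) with hQ
  have hQ0 : 0 ≤ Q := Finset.sum_nonneg fun h _ => by positivity
  have k1 := key (fun _ => True)
  have k2 : ∑ h : Fin n → Fin B,
        ((J.filter (fun j => h j ≠ h i ∧ True)).card : ℝ) * (1 / (((S h).card : ℝ) + 1))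
        = ((J.card : ℝ) + 1) * Q - (B:ℝ) ^ n := by
    have : (B:ℝ)^n = ∑ h : Fin n → Fin B, (1:ℝ) := by simp
    rw [this, hQ, Finset.mul_sum, ← Finset.sum_sub_distrib]
    refine Finset.sum_congr rfl fun h _ => ?_
    have := Finset.card_filter_add_card_filter_not (s := J) (fun j => h j = h i)
    have h' : ((J.filter (fun j => h j ≠ h i ∧ True)).card : ℝ) = J.card - (S h).card := by
      simp only [and_true, hS, ne_eq]
      rw [← this]; push_cast; ring
    rw [h']
    field_simp
    ring
  have k3 : ∑ h : Fin n → Fin B, (if True ∧ ∃ j ∈ J, h j = h i then (1:ℝ) else 0) ≤ (B:ℝ)^n := by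
    calc _ ≤ ∑ h : Fin n → Fin B, (1:ℝ) := Finset.sum_le_sum fun h _ => by split_ifs <;> norm_num
      _ = _ := by simp
  have hB1 : (0:ℝ) ≤ (B:ℝ) - 1 := by
    have : (2:ℝ) ≤ B := by exact_mod_cast hB
    linarith
  have k4 : ((J.card : ℝ) + 1) * Q ≤ B * (B:ℝ)^n := by
    rw [k2] at k1
    nlinarith [mul_le_mul_of_nonneg_left k3 hB1]
  have hN0 : 0 ≤ N := by
    have : Nonempty (Fin B) := ⟨⟨0, by omega⟩⟩
    exact le_trans (Nat.cast_nonneg _) (hN (Classical.arbitrary _))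
  have k5 : ((B:ℝ) - 1) *
      ∑ h : Fin n → Fin B, (if P h ∧ ∃ j ∈ J, h j = h i then (1:ℝ) else 0) ≤ N * Q := by
    rw [key P, hQ, Finset.mul_sum]
    refine Finset.sum_le_sum fun h _ => ?_
    exact mul_le_mul_of_nonneg_right (hN h) (by positivity)
  calc _ = ((J.card : ℝ) + 1) * (((B:ℝ) - 1) *
      ∑ h : Fin n → Fin B, (if P h ∧ ∃ j ∈ J, h j = h i then (1:ℝ) else 0)) := by ring
    _ ≤ ((J.card : ℝ) + 1) * (N * Q) := mul_le_mul_of_nonneg_left k5 (by positivity)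
    _ = N * (((J.card : ℝ) + 1) * Q) := by ring
    _ ≤ _ := mul_le_mul_of_nonneg_left k4 hN0

lemma count_zipf {n m : ℕ} (x t : ℝ) (ht : 0 ≤ t) (J : Finset (Fin n)) (hJ : ∀ j ∈ J, (j:ℕ) < m) :
    ((J.filter (fun j => |zipf j - x| ≤ t)).card : ℝ) ≤ 2 * t * m ^ 2 + 1 := by
  set T := J.filter (fun j => |zipf j - x| ≤ t) with hT
  rcases T.eq_empty_or_nonempty with h0 | hne
  · rw [h0]; simp; positivity
  · set a := T.min' hne
    set b := T.max' hne
    have ha : a ∈ T := T.min'_mem hne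
    have hb : b ∈ T := T.max'_mem hne
    have hsub : T ⊆ Finset.Icc a b := fun y hy => by
      simp [a, b, T.min'_le y hy, T.le_max' y hy]
    have hc := Finset.card_le_card hsub
    rw [Fin.card_Icc] at hc
    have hab : a ≤ b := T.min'_le b hb
    have hab' : (a:ℕ) ≤ b := hab
    have hc' : (T.card : ℝ) ≤ (b:ℕ) + 1 - (a:ℕ) := by
      have : T.card + (a:ℕ) ≤ b + 1 := by omega
      have : (T.card : ℝ) + (a:ℕ) ≤ (b:ℕ) + 1 := by exact_mod_cast this
      linarith
    simp only [hT, mem_filter] at ha hb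
    have ham : ((a:ℕ):ℝ) + 1 ≤ m := by exact_mod_cast hJ a ha.1
    have hbm : ((b:ℕ):ℝ) + 1 ≤ m := by exact_mod_cast hJ b hb.1
    have h1 := abs_le.1 ha.2
    have h2 := abs_le.1 hb.2
    have h3 : zipf a - zipf b ≤ 2 * t := by linarith
    have hA : (0:ℝ) < ((a:ℕ):ℝ) + 1 := by positivity
    have hBp : (0:ℝ) < ((b:ℕ):ℝ) + 1 := by positivity
    have h4 : zipf a - zipf b = (((b:ℕ):ℝ) - (a:ℕ)) / ((((a:ℕ):ℝ) + 1) * (((b:ℕ):ℝ) + 1)) := by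
      unfold zipf; field_simp; ring
    rw [h4, div_le_iff₀ (by positivity)] at h3
    have h5 : ((((a:ℕ):ℝ) + 1) * (((b:ℕ):ℝ) + 1)) ≤ (m:ℝ)^2 := by nlinarith
    have h6 : 2 * t * ((((a:ℕ):ℝ) + 1) * (((b:ℕ):ℝ) + 1)) ≤ 2 * t * (m:ℝ)^2 :=
      mul_le_mul_of_nonneg_left h5 (by positivity)
    linarith

/-- The noise in one row, without the sign of item `i`. -/
noncomputable def noise {n B : ℕ} (i : Fin n) (h : Fin n → Fin B) (s : Fin n → Bool) : ℝ :=
  ∑ j ∈ univ.erase i, if h j = h i then sgn (s j) * zipf j else 0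

lemma noise_update {n B : ℕ} (i j : Fin n) (hij : j ≠ i) (h : Fin n → Fin B) (s : Fin n → Bool)
    (hne : h j ≠ h i) :
    noise i (Function.update h j (h i)) s = noise i h s + sgn (s j) * zipf j := by
  unfold noise
  have hj : j ∈ univ.erase i := by simp [hij]
  rw [← Finset.add_sum_erase _ _ hj, ← Finset.add_sum_erase _ _ hj]
  simp only [Function.update_self, Function.update_of_ne hij.symm, hne, if_true, if_false]
  rw [zero_add, add_comm]
  congr 1
  refine Finset.sum_congr rfl fun x hx => ?_
  rw [Function.update_of_ne (by simp at hx; exact hx.1)]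

lemma sgn_cases (b : Bool) : sgn b = 1 ∨ sgn b = -1 := by
  cases b <;> simp [sgn]

/-- items of index `< m` other than `i` -/
def items {n : ℕ} (i : Fin n) (m : ℕ) : Finset (Fin n) := (univ.filter (fun j : Fin n => (j:ℕ) < m)).erase i

lemma items_card {n : ℕ} (i : Fin n) (m : ℕ) (hm : m ≤ n) : m ≤ (items i m).card + 1 := by
  have h1 : (univ.filter (fun j : Fin n => (j:ℕ) < m)).card = m := by
    rw [Fin.card_filter_val_lt]; omega
  have := Finset.pred_card_le_card_erase (s := univ.filter (fun j : Fin n => (j:ℕ) < m)) (a := i)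
  unfold items
  omega

lemma no_hit_exp {n B m : ℕ} (hB : 2 ≤ B) (hm : m ≤ n) (i : Fin n) :
    ∑ h : Fin n → Fin B, (if ∀ j ∈ items i m, h j ≠ h i then (1:ℝ) else 0) ≤
      Real.exp (-(((m:ℝ) - 1) / B)) * (B:ℝ) ^ n := by
  rw [no_hit (by omega) i _ (by simp [items])]
  apply mul_le_mul_of_nonneg_right _ (by positivity)
  have hB' : (2:ℝ) ≤ B := by exact_mod_cast hB
  have h1 : (1 - 1/(B:ℝ)) ≤ Real.exp (-(1/(B:ℝ))) := by
    have := Real.add_one_le_exp (-(1/(B:ℝ)))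
    linarith
  have h0 : 0 ≤ 1 - 1/(B:ℝ) := by
    rw [sub_nonneg, div_le_one (by linarith)]; linarith
  have hc : (m:ℝ) ≤ (items i m).card + 1 := by exact_mod_cast items_card i m hm
  calc _ ≤ (Real.exp (-(1/(B:ℝ)))) ^ (items i m).card := pow_le_pow_left₀ h0 h1 _
    _ = Real.exp (((items i m).card : ℝ) * (-(1/(B:ℝ)))) := by rw [Real.exp_nat_mul]
    _ ≤ _ := by
      apply Real.exp_le_exp.2
      have : ((m:ℝ) - 1) / B ≤ ((items i m).card : ℝ) / B := by gcongr; linarith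
      have e : ((items i m).card : ℝ) * (-(1/(B:ℝ))) = - (((items i m).card : ℝ) / B) := by ring
      rw [e]; linarith

/-- anti-concentration for one row, sign functions fixed -/
lemma anti {n B m : ℕ} (hB : 2 ≤ B) (hm1 : 1 ≤ m) (hm : m ≤ n) (i : Fin n) (s : Fin n → Bool)
    (t : ℝ) (ht : 0 ≤ t) :
    ∑ h : Fin n → Fin B, (if |noise i h s| ≤ t then (1:ℝ) else 0) ≤
      (Real.exp (-(((m:ℝ) - 1) / B)) + (8 * t * m + 4 / m)) * (B:ℝ) ^ n := by
  classical
  have hiJ : i ∉ items i m := by simp [items]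
  have hg := good_bound hB i (items i m) hiJ (fun h => |noise i h s| ≤ t) (4 * t * m ^ 2 + 2) (by
    intro h
    have c1 := count_zipf (m := m) (noise i h s) t ht (items i m) (by simp [items])
    have c2 := count_zipf (m := m) (-noise i h s) t ht (items i m) (by simp [items])
    have hsub : (items i m).filter (fun j => h j ≠ h i ∧ |noise i (Function.update h j (h i)) s| ≤ t)
      ⊆ (items i m).filter (fun j => |zipf j - noise i h s| ≤ t) ∪
        (items i m).filter (fun j => |zipf j - -noise i h s| ≤ t) := by
      intro j hj
      simp only [mem_filter, mem_union] at hj ⊢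
      obtain ⟨hj, hne, hle⟩ := hj
      rw [noise_update i j (by rintro rfl; exact hiJ hj) h s hne] at hle
      rcases sgn_cases (s j) with e | e
      · right
        refine ⟨hj, ?_⟩
        rw [e] at hle
        convert hle using 2; ring
      · left
        refine ⟨hj, ?_⟩
        rw [e, ← abs_neg] at hle
        convert hle using 2; ring
    have h3 := (Finset.card_le_card hsub).trans (Finset.card_union_le _ _)
    have h4 : (((items i m).filter (fun j => h j ≠ h i ∧ |noise i (Function.update h j (h i)) s| ≤ t)).card : ℝ) ≤ ((items i m).filter (fun j => |zipf j - noise i h s| ≤ t)).card +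
        ((items i m).filter (fun j => |zipf j - -noise i h s| ≤ t)).card := by exact_mod_cast h3
    linarith)
  set A := ∑ h : Fin n → Fin B, (if |noise i h s| ≤ t ∧ ∃ j ∈ items i m, h j = h i then (1:ℝ) else 0) with hA
  have hA0 : 0 ≤ A := Finset.sum_nonneg fun h _ => by split_ifs <;> norm_num
  have hsplit : ∑ h : Fin n → Fin B, (if |noise i h s| ≤ t then (1:ℝ) else 0) ≤
      ∑ h : Fin n → Fin B, (if ∀ j ∈ items i m, h j ≠ h i then (1:ℝ) else 0) + A := by
    rw [hA, ← Finset.sum_add_distrib]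
    refine Finset.sum_le_sum fun h _ => ?_
    by_cases hE : ∃ j ∈ items i m, h j = h i
    · have : ¬ ∀ j ∈ items i m, h j ≠ h i := by push Not; exact hE
      simp [hE, this]
    · have : ∀ j ∈ items i m, h j ≠ h i := by push Not at hE; exact hE
      rw [if_pos this]
      split_ifs <;> norm_num
  have hn := no_hit_exp hB hm i
  have hB' : (2:ℝ) ≤ B := by exact_mod_cast hB
  have hm' : (1:ℝ) ≤ m := by exact_mod_cast hm1
  have hc : (m:ℝ) ≤ (items i m).card + 1 := by exact_mod_cast items_card i m hm
  have hAb : A ≤ (8 * t * m + 4 / m) * (B:ℝ)^n := by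
    have h1 : (B:ℝ) / 2 * m * A ≤ ((B:ℝ) - 1) * (((items i m).card : ℝ) + 1) * A := by
      apply mul_le_mul_of_nonneg_right _ hA0
      apply mul_le_mul (by linarith) hc (by linarith) (by linarith)
    have h2 : (B:ℝ) / 2 * m * A ≤ (B:ℝ) / 2 * m * ((8 * t * m + 4 / m) * (B:ℝ)^n) := by
      refine (h1.trans hg).trans (le_of_eq ?_)
      field_simp; ring
    exact le_of_mul_le_mul_left h2 (by positivity)
  calc _ ≤ _ := hsplit
    _ ≤ _ := add_le_add hn hAb
    _ = _ := by ring

lemma countP_eq {k : ℕ} (v : Fin k → ℝ) (p : ℝ → Prop) [DecidablePred p] :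
    (univ.filter (fun ℓ => p (v ℓ))).card =
      (List.insertionSort (· ≤ ·) (List.ofFn v)).countP (fun x => decide (p x)) := by
  rw [(List.perm_insertionSort _ _).countP_eq, List.ofFn_eq_map, List.countP_map,
    List.countP_eq_length_filter]
  rfl

lemma median_upper {k r : ℕ} (hk : k = 2 * r + 1) (v : Fin k → ℝ) (a : ℝ) (h : medianFin v ≤ a) :
    (univ.filter (fun ℓ => a < v ℓ)).card ≤ r := by
  rw [countP_eq v (fun x => a < x)]
  unfold medianFin at h
  set l := List.insertionSort (· ≤ ·) (List.ofFn v) with hl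
  have hlen : l.length = k := by simp [hl]
  have hs : l.SortedLE := List.sortedLE_insertionSort
  have hr : k / 2 = r := by omega
  rw [hr, List.getD_eq_getElem _ _ (by omega)] at h
  rw [← List.take_append_drop (r+1) l, List.countP_append]
  have h1 : (l.take (r+1)).countP (fun x => decide (a < x)) = 0 := by
    rw [List.countP_eq_zero]
    intro x hx
    obtain ⟨j, hj, rfl⟩ := List.mem_iff_getElem.1 hx
    simp only [List.length_take] at hj
    rw [List.getElem_take]
    have : l[j]'(by omega) ≤ l[r]'(by omega) := hs.getElem_le_getElem_of_le (by omega)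
    simp; linarith
  have h2 := List.countP_le_length (p := fun x => decide (a < x)) (l := l.drop (r+1))
  rw [List.length_drop] at h2
  omega

lemma median_lower {k r : ℕ} (hk : k = 2 * r + 1) (v : Fin k → ℝ) (a : ℝ) (h : a ≤ medianFin v) :
    (univ.filter (fun ℓ => v ℓ < a)).card ≤ r := by
  rw [countP_eq v (fun x => x < a)]
  unfold medianFin at h
  set l := List.insertionSort (· ≤ ·) (List.ofFn v) with hl
  have hlen : l.length = k := by simp [hl]
  have hs : l.SortedLE := List.sortedLE_insertionSort
  have hr : k / 2 = r := by omega
  rw [hr, List.getD_eq_getElem _ _ (by omega)] at h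
  rw [← List.take_append_drop r l, List.countP_append]
  have h1 : (l.drop r).countP (fun x => decide (x < a)) = 0 := by
    rw [List.countP_eq_zero]
    intro x hx
    obtain ⟨j, hj, rfl⟩ := List.mem_iff_getElem.1 hx
    simp only [List.length_drop] at hj
    rw [List.getElem_drop]
    have : l[r]'(by omega) ≤ l[r+j]'(by omega) := hs.getElem_le_getElem_of_le (by omega)
    simp; linarith
  have h2 := List.countP_le_length (p := fun x => decide (x < a)) (l := l.take r)
  rw [List.length_take] at h2
  omega

lemma median_ge_of_all {k r : ℕ} (hk : k = 2 * r + 1) (v : Fin k → ℝ) (a : ℝ)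
    (h : ∀ ℓ, a ≤ v ℓ) : a ≤ medianFin v := by
  by_contra hlt
  push Not at hlt
  have h1 := median_upper hk v (medianFin v) le_rfl
  have h2 : univ.filter (fun ℓ => medianFin v < v ℓ) = univ := by
    ext ℓ; simp; linarith [h ℓ]
  rw [h2] at h1
  simp at h1
  omega

section moments
variable {R : Type*} [Fintype R]

lemma sum_cons (k : ℕ) (F : (Fin (k+1) → R) → ℝ) :
    ∑ ω : Fin (k+1) → R, F ω = ∑ a : R, ∑ ω : Fin k → R, F (Fin.cons a ω) := by
  rw [← (Fin.consEquiv (fun _ => R)).sum_comp, Fintype.sum_prod_type]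
  rfl

lemma sum_single (g : R → ℝ) (k : ℕ) :
    ∑ ω : Fin k → R, ∑ ℓ, g (ω ℓ) = k * (Fintype.card R : ℝ) ^ (k - 1) * ∑ a, g a := by
  induction k with
  | zero => simp
  | succ k ih =>
    rw [sum_cons]
    simp only [Fin.sum_univ_succ, Fin.cons_zero, Fin.cons_succ, Finset.sum_add_distrib, ih]
    simp only [sum_const, card_univ, nsmul_eq_mul, Fintype.card_fun, Fintype.card_fin, ← Finset.mul_sum]
    rcases k with _ | k
    · simp
    · push_cast; ring

lemma moments (W : R → ℝ) (hW : ∀ a, W a ^ 2 = 1) (hW0 : ∑ a, W a = 0) (k : ℕ) :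
    (∑ ω : Fin k → R, (∑ ℓ, W (ω ℓ)) ^ 2 = k * (Fintype.card R : ℝ) ^ k) ∧
    (∑ ω : Fin k → R, (∑ ℓ, W (ω ℓ)) ^ 4 ≤ 3 * (k:ℝ) ^ 2 * (Fintype.card R : ℝ) ^ k) := by
  induction k with
  | zero => simp
  | succ k ih =>
    obtain ⟨ih2, ih4⟩ := ih
    rw [sum_cons, sum_cons]
    simp only [Fin.sum_univ_succ, Fin.cons_zero, Fin.cons_succ]
    have e2 : ∀ (a : R) (ω : Fin k → R), (W a + ∑ ℓ, W (ω ℓ)) ^ 2 =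
        1 + W a * (2 * ∑ ℓ, W (ω ℓ)) + (∑ ℓ, W (ω ℓ)) ^ 2 := by
      intro a ω; rw [← hW a]; ring
    have e4 : ∀ (a : R) (ω : Fin k → R), (W a + ∑ ℓ, W (ω ℓ)) ^ 4 =
        1 + W a * (4 * ∑ ℓ, W (ω ℓ)) + 6 * (∑ ℓ, W (ω ℓ)) ^ 2 + W a * (4 * (∑ ℓ, W (ω ℓ)) ^ 3)
          + (∑ ℓ, W (ω ℓ)) ^ 4 := by
      intro a ω
      have h := hW a
      set D := ∑ ℓ, W (ω ℓ)
      linear_combination (W a ^ 2 + 1 + 4 * W a * D + 6 * D ^ 2) * h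
    simp only [e2, e4, Finset.sum_add_distrib, ← Finset.mul_sum, ← Finset.sum_mul, hW0, ih2]
    simp only [sum_const, card_univ, nsmul_eq_mul, Fintype.card_fun, Fintype.card_fin]
    constructor
    · push_cast; ring
    · have hc : (0:ℝ) ≤ (Fintype.card R : ℝ) := by positivity
      have h1 := mul_le_mul_of_nonneg_left ih4 hc
      have hp : (0:ℝ) ≤ (Fintype.card R : ℝ) ^ k * Fintype.card R := by positivity
      push_cast
      simp only [mul_one, zero_mul, add_zero, pow_succ] at h1 ⊢
      nlinarith [h1, hp]

set_option maxHeartbeats 1000000 in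
/-- The abstract statement for large `k`. -/
lemma abstract_large (k : ℕ) (hodd : Odd k) (hk : 1000000 ≤ k) (X W : R → ℝ)
    (hW : ∀ a, W a = 1 ∨ W a = -1)
    (hW0 : ∑ a, W a = 0) (t : ℝ) (ht : 0 ≤ t)
    (h1 : ∀ a, W a = 1 → t < |X a| → t < X a) (h2 : ∀ a, W a = -1 → t < |X a| → X a < -t)
    (hp : ∑ a, (if |X a| ≤ t then (1:ℝ) else 0) ≤ 1 / (100 * Real.sqrt k) * Fintype.card R)
    (f : ℝ) :
    t / 10 * (Fintype.card R : ℝ) ^ k ≤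
      ∑ ω : Fin k → R, |medianFin (fun ℓ => f + X (ω ℓ)) - f| := by
  classical
  obtain ⟨r, hr⟩ := hodd
  set q := Real.sqrt k with hq
  have hkR : (1000000:ℝ) ≤ k := by exact_mod_cast hk
  have hqq : q ^ 2 = k := Real.sq_sqrt (by linarith)
  have hq1 : 1000 ≤ q := Real.le_sqrt_of_sq_le (by norm_num; linarith)
  set Z : R → ℝ := fun a => if |X a| ≤ t then (1:ℝ) else 0 with hZ
  have hZ0 : ∀ a, 0 ≤ Z a := fun a => by simp only [hZ]; split_ifs <;> norm_num
  have main : ∀ ω : Fin k → R,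
      t * (((∑ ℓ, W (ω ℓ)) ^ 2 / k - 1/4) * (8 - (∑ ℓ, W (ω ℓ)) ^ 2 / k) / 16
        - 8 / q * ∑ ℓ, Z (ω ℓ)) ≤ |medianFin (fun ℓ => f + X (ω ℓ)) - f| := by
    intro ω
    set D := ∑ ℓ, W (ω ℓ) with hD
    set z := ∑ ℓ, Z (ω ℓ) with hz
    set M := medianFin (fun ℓ => f + X (ω ℓ)) with hM
    have hz0 : 0 ≤ z := Finset.sum_nonneg fun ℓ _ => hZ0 _
    have hzq : 0 ≤ 8 / q * z := by positivity
    by_cases hm : t < |M - f|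
    · refine le_trans (mul_le_of_le_one_right ht ?_) hm.le
      nlinarith [sq_nonneg (D^2/k - 33/8)]
    · refine le_trans (mul_nonpos_of_nonneg_of_nonpos ht ?_) (abs_nonneg _)
      push Not at hm
      rw [abs_le] at hm
      have m1 := median_upper hr (fun ℓ => f + X (ω ℓ)) (f + t) (by linarith)
      have m2 := median_lower hr (fun ℓ => f + X (ω ℓ)) (f - t) (by linarith)
      have c1 : (((univ.filter (fun ℓ => f + t < f + X (ω ℓ))).card : ℕ) : ℝ) =
          ∑ ℓ, if f + t < f + X (ω ℓ) then (1:ℝ) else 0 := by simp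
      have c2 : (((univ.filter (fun ℓ => f + X (ω ℓ) < f - t)).card : ℕ) : ℝ) =
          ∑ ℓ, if f + X (ω ℓ) < f - t then (1:ℝ) else 0 := by simp
      have s1 : ∑ ℓ, ((1 + W (ω ℓ)) / 2 - Z (ω ℓ)) ≤
          ∑ ℓ, if f + t < f + X (ω ℓ) then (1:ℝ) else 0 := by
        refine Finset.sum_le_sum fun ℓ _ => ?_
        simp only [hZ]
        by_cases hx : |X (ω ℓ)| ≤ t
        · rcases hW (ω ℓ) with e | e <;> simp only [hx, e, if_true] <;> split_ifs <;> norm_num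
        · rcases hW (ω ℓ) with e | e
          · have hpos : f + t < f + X (ω ℓ) := by linarith [h1 _ e (not_le.1 hx)]
            rw [if_neg hx, if_pos hpos, e]; norm_num
          · simp only [hx, e, if_false]; split_ifs <;> norm_num
      have s2 : ∑ ℓ, ((1 - W (ω ℓ)) / 2 - Z (ω ℓ)) ≤
          ∑ ℓ, if f + X (ω ℓ) < f - t then (1:ℝ) else 0 := by
        refine Finset.sum_le_sum fun ℓ _ => ?_
        simp only [hZ]
        by_cases hx : |X (ω ℓ)| ≤ t
        · rcases hW (ω ℓ) with e | e <;> simp only [hx, e, if_true] <;> split_ifs <;> norm_num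
        · rcases hW (ω ℓ) with e | e
          · simp only [hx, e, if_false]; split_ifs <;> norm_num
          · have hpos : f + X (ω ℓ) < f - t := by linarith [h2 _ e (not_le.1 hx)]
            rw [if_neg hx, if_pos hpos, e]; norm_num
      rw [← c1, Finset.sum_sub_distrib, ← Finset.sum_div, Finset.sum_add_distrib] at s1
      rw [← c2, Finset.sum_sub_distrib, ← Finset.sum_div, Finset.sum_sub_distrib] at s2
      simp only [sum_const, card_univ, Fintype.card_fin, nsmul_eq_mul, mul_one] at s1 s2
      rw [← hD, ← hz] at s1 s2
      have m1' : (((univ.filter (fun ℓ => f + t < f + X (ω ℓ))).card : ℕ) : ℝ) ≤ r := by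
        exact_mod_cast m1
      have m2' : (((univ.filter (fun ℓ => f + X (ω ℓ) < f - t)).card : ℕ) : ℝ) ≤ r := by
        exact_mod_cast m2
      have hrR : (k:ℝ) = 2 * r + 1 := by exact_mod_cast hr
      have d1 : D ≤ 2 * z := by linarith
      have d2 : -(2 * z) ≤ D := by linarith
      have hDz : D ^ 2 ≤ 4 * z ^ 2 := by nlinarith
      by_cases hy : D ^ 2 / k ≤ 1 / 4
      · nlinarith
      · push Not at hy
        rw [lt_div_iff₀ (by linarith), ← hqq] at hy
        have hzq2 : q ≤ 4 * z := by
          by_contra hcon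
          push Not at hcon
          nlinarith
        have : 1 ≤ 8 / q * z := by
          rw [div_mul_eq_mul_div, le_div_iff₀ (by linarith)]; linarith
        nlinarith [sq_nonneg (D^2/k - 33/8)]
  refine le_trans ?_ (Finset.sum_le_sum fun ω _ => main ω)
  rw [← Finset.mul_sum, div_mul_eq_mul_div, mul_div_assoc]
  apply mul_le_mul_of_nonneg_left _ ht
  obtain ⟨M2, M4⟩ := moments W (fun a => by rcases hW a with e | e <;> rw [e] <;> norm_num) hW0 k
  set C : ℝ := (Fintype.card R : ℝ) ^ k with hC
  have hC0 : 0 ≤ C := by positivity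
  have hS := sum_single Z k
  have hSb : ∑ ω : Fin k → R, ∑ ℓ, Z (ω ℓ) ≤ q / 100 * C := by
    rw [hS]
    have : (Fintype.card R : ℝ) ^ (k - 1) * Fintype.card R = C := by
      rw [hC, ← pow_succ]; congr 1; omega
    calc _ ≤ k * (Fintype.card R : ℝ) ^ (k - 1) * (1 / (100 * q) * Fintype.card R) :=
          mul_le_mul_of_nonneg_left hp (by positivity)
      _ = k / (100 * q) * ((Fintype.card R : ℝ) ^ (k - 1) * Fintype.card R) := by ring
      _ = _ := by
        rw [this, ← hqq]; field_simp
  have expand : ∀ ω : Fin k → R,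
      (((∑ ℓ, W (ω ℓ)) ^ 2 / k - 1/4) * (8 - (∑ ℓ, W (ω ℓ)) ^ 2 / k) / 16
        - 8 / q * ∑ ℓ, Z (ω ℓ)) = (33/64) / k * (∑ ℓ, W (ω ℓ)) ^ 2 - 1/16/k^2 * (∑ ℓ, W (ω ℓ)) ^ 4
          - 1/8 - 8 / q * ∑ ℓ, Z (ω ℓ) := by
    intro ω
    ring
  simp only [expand, Finset.sum_sub_distrib, ← Finset.mul_sum, M2]
  have hk0 : (0:ℝ) < k := by linarith
  have t1 : (33/64) / (k:ℝ) * (k * C) = 33/64 * C := by field_simp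
  have t2 : 1/16/(k:ℝ)^2 * ∑ ω : Fin k → R, (∑ ℓ, W (ω ℓ)) ^ 4 ≤ 3/16 * C := by
    calc _ ≤ 1/16/(k:ℝ)^2 * (3 * (k:ℝ) ^ 2 * C) := mul_le_mul_of_nonneg_left M4 (by positivity)
      _ = _ := by field_simp
  have t3 : 8 / q * ∑ ω : Fin k → R, ∑ ℓ, Z (ω ℓ) ≤ 8/100 * C := by
    calc _ ≤ 8 / q * (q / 100 * C) := mul_le_mul_of_nonneg_left hSb (by positivity)
      _ = _ := by field_simp
  have t4 : ∑ ω : Fin k → R, (1/8 : ℝ) = 1/8 * C := by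
    rw [Finset.sum_const, card_univ, Fintype.card_fun, Fintype.card_fin, nsmul_eq_mul, hC]
    push_cast; ring
  rw [t1, t4]
  linarith

lemma abstract_small (k : ℕ) (hodd : Odd k) (X : R → ℝ) (t α : ℝ) (ht : 0 ≤ t) (hα : 0 ≤ α)
    (hp : α * Fintype.card R ≤ ∑ a, (if t ≤ X a then (1:ℝ) else 0)) (f : ℝ) :
    t * α ^ k * (Fintype.card R : ℝ) ^ k ≤
      ∑ ω : Fin k → R, |medianFin (fun ℓ => f + X (ω ℓ)) - f| := by
  classical
  obtain ⟨r, hr⟩ := hodd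
  have main : ∀ ω : Fin k → R, t * ∏ ℓ, (if t ≤ X (ω ℓ) then (1:ℝ) else 0) ≤
      |medianFin (fun ℓ => f + X (ω ℓ)) - f| := by
    intro ω
    by_cases hall : ∀ ℓ, t ≤ X (ω ℓ)
    · have := median_ge_of_all hr (fun ℓ => f + X (ω ℓ)) (f + t) (fun ℓ => by linarith [hall ℓ])
      simp only [hall, if_true, prod_const_one, mul_one]
      exact le_trans (by linarith) (le_abs_self _)
    · push Not at hall
      obtain ⟨ℓ, hℓ⟩ := hall
      rw [Finset.prod_eq_zero (mem_univ ℓ) (if_neg (not_le.2 hℓ)), mul_zero]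
      positivity
  refine le_trans ?_ (Finset.sum_le_sum fun ω _ => main ω)
  have hprod : ∑ ω : Fin k → R, ∏ ℓ, (if t ≤ X (ω ℓ) then (1:ℝ) else 0) =
      (∑ a, (if t ≤ X a then (1:ℝ) else 0)) ^ k := by
    have := Finset.sum_prod_piFinset (univ : Finset R)
      (fun (_ : Fin k) a => if t ≤ X a then (1:ℝ) else 0)
    simp only [Fintype.piFinset_univ, prod_const, card_univ, Fintype.card_fin] at this
    exact this
  rw [← Finset.mul_sum, hprod, mul_assoc, ← mul_pow]
  apply mul_le_mul_of_nonneg_left _ ht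
  exact pow_le_pow_left₀ (by positivity) hp k

end moments

lemma sgn_not (b : Bool) : sgn (!b) = - sgn b := by cases b <;> simp [sgn]

lemma sum_flip {n : ℕ} (j : Fin n) (F : (Fin n → Bool) → ℝ) :
    ∑ s : Fin n → Bool, F (Function.update s j (!s j)) = ∑ s : Fin n → Bool, F s := by
  have hinv : Function.Involutive (fun s : Fin n → Bool => Function.update s j (!s j)) := by
    intro s; simp
  exact Equiv.sum_comp (hinv.toPerm) F

lemma noise_flip_self {n B : ℕ} (i : Fin n) (h : Fin n → Fin B) (s : Fin n → Bool) :
    noise i h (Function.update s i (!s i)) = noise i h s := by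
  unfold noise
  refine Finset.sum_congr rfl fun x hx => ?_
  rw [Function.update_of_ne (by simp at hx; exact hx)]

lemma noise_flip {n B : ℕ} (i j : Fin n) (hij : j ≠ i) (h : Fin n → Fin B) (s : Fin n → Bool)
    (he : h j = h i) :
    noise i h (Function.update s j (!s j)) = noise i h s - 2 * (sgn (s j) * zipf j) := by
  unfold noise
  have hj : j ∈ univ.erase i := by simp [hij]
  rw [← Finset.add_sum_erase _ _ hj, ← Finset.add_sum_erase _ _ hj]
  simp only [Function.update_self, he, if_true, sgn_not]
  have : ∑ x ∈ (univ.erase i).erase j,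
      (if h x = h i then sgn (Function.update s j (!s j) x) * zipf x else 0) =
      ∑ x ∈ (univ.erase i).erase j, (if h x = h i then sgn (s x) * zipf x else 0) := by
    refine Finset.sum_congr rfl fun x hx => ?_
    rw [Function.update_of_ne (by simp at hx; exact hx.1)]
  rw [this]; ring

/-- error of one row -/
noncomputable def rowX {n B : ℕ} (i : Fin n) (a : (Fin n → Fin B) × (Fin n → Bool)) : ℝ :=
  sgn (a.2 i) * noise i a.1 a.2

lemma row_eq {n B : ℕ} (i : Fin n) (h : Fin n → Fin B) (s : Fin n → Bool) :
    sgn (s i) * (∑ j : Fin n, if h j = h i then sgn (s j) * zipf j else 0) =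
      zipf i + rowX i (h, s) := by
  unfold rowX noise
  rw [← Finset.add_sum_erase _ _ (mem_univ i)]
  simp only [if_true]
  rcases sgn_cases (s i) with e | e <;> rw [e] <;> ring

lemma abs_rowX {n B : ℕ} (i : Fin n) (a : (Fin n → Fin B) × (Fin n → Bool)) :
    |rowX i a| = |noise i a.1 a.2| := by
  unfold rowX
  rcases sgn_cases (a.2 i) with e | e <;> rw [e] <;> simp

lemma rowX_flip {n B : ℕ} (i : Fin n) (h : Fin n → Fin B) (s : Fin n → Bool) :
    rowX i (h, Function.update s i (!s i)) = - rowX i (h, s) := by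
  unfold rowX
  simp only [noise_flip_self, Function.update_self, sgn_not]
  ring

lemma card_row {n B : ℕ} :
    (Fintype.card ((Fin n → Fin B) × (Fin n → Bool)) : ℝ) = (B:ℝ) ^ n * 2 ^ n := by
  simp [Fintype.card_prod]

lemma exp_reindex {n B k : ℕ} (i : Fin n) :
    expUnif (fun ω : (Fin k → Fin n → Fin B) × (Fin k → Fin n → Bool) =>
            |csEst zipf ω.1 ω.2 i - zipf i|) =
    (∑ ω : Fin k → (Fin n → Fin B) × (Fin n → Bool),
      |medianFin (fun ℓ => zipf i + rowX i (ω ℓ)) - zipf i|) /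
      (Fintype.card ((Fin n → Fin B) × (Fin n → Bool)) : ℝ) ^ k := by
  unfold expUnif
  have e := Equiv.arrowProdEquivProdArrow (Fin k) (fun _ => Fin n → Fin B) (fun _ => Fin n → Bool)
  congr 1
  · rw [← (Equiv.arrowProdEquivProdArrow (Fin k) (fun _ => Fin n → Fin B)
      (fun _ => Fin n → Bool)).sum_comp]
    refine Finset.sum_congr rfl fun ω _ => ?_
    unfold csEst
    simp only [row_eq]
    rfl
  · rw [← Fintype.card_congr e, Fintype.card_fun]
    simp

lemma small_prob {n B : ℕ} (hB : 3 ≤ B) (hn : B ≤ n) (i : Fin n) :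
    (1/10 : ℝ) * Fintype.card ((Fin n → Fin B) × (Fin n → Bool)) ≤
      ∑ a : (Fin n → Fin B) × (Fin n → Bool), (if 1 / (B:ℝ) ≤ rowX i a then (1:ℝ) else 0) := by
  classical
  set t : ℝ := 1 / (B:ℝ) with ht
  have hB' : (3:ℝ) ≤ B := by exact_mod_cast hB
  -- no hit
  have hnh := no_hit_exp (m := B) (by omega : 2 ≤ B) hn i
  have hexp : Real.exp (-(((B:ℝ) - 1) / B)) ≤ 3/5 := by
    have h1 : (2/3:ℝ) ≤ ((B:ℝ) - 1) / B := by
      rw [le_div_iff₀ (by linarith)]; linarith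
    have h2 := Real.add_one_le_exp (((B:ℝ) - 1) / B)
    rw [Real.exp_neg, inv_le_comm₀ (Real.exp_pos _) (by norm_num)]
    linarith
  have hhit : (2/5:ℝ) * (B:ℝ)^n ≤
      ∑ h : Fin n → Fin B, (if ∃ j ∈ items i B, h j = h i then (1:ℝ) else 0) := by
    have e : ∑ h : Fin n → Fin B, (if ∃ j ∈ items i B, h j = h i then (1:ℝ) else 0) =
        (B:ℝ)^n - ∑ h : Fin n → Fin B, (if ∀ j ∈ items i B, h j ≠ h i then (1:ℝ) else 0) := by
      have : (B:ℝ)^n = ∑ h : Fin n → Fin B, (1:ℝ) := by simp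
      rw [this, ← Finset.sum_sub_distrib]
      refine Finset.sum_congr rfl fun h _ => ?_
      by_cases hE : ∃ j ∈ items i B, h j = h i
      · have : ¬ ∀ j ∈ items i B, h j ≠ h i := by push Not; exact hE
        rw [if_pos hE, if_neg this]; norm_num
      · have : ∀ j ∈ items i B, h j ≠ h i := by push Not at hE; exact hE
        rw [if_pos this, if_neg hE]; norm_num
    rw [e]
    have : Real.exp (-(((B:ℝ) - 1) / B)) * (B:ℝ)^n ≤ 3/5 * (B:ℝ)^n := by gcongr
    linarith
  have hs : ∀ h : Fin n → Fin B, (if ∃ j ∈ items i B, h j = h i then (1:ℝ) else 0) * (2^n / 2) ≤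
      ∑ s : Fin n → Bool, (if t ≤ |rowX i (h, s)| then (1:ℝ) else 0) := by
    intro h
    by_cases hE : ∃ j ∈ items i B, h j = h i
    · rw [if_pos hE, one_mul]
      obtain ⟨j, hj, he⟩ := hE
      simp only [items, mem_erase, mem_filter, mem_univ, true_and] at hj
      have hz : t ≤ zipf j := by
        unfold zipf
        rw [ht, one_div]
        apply inv_anti₀ (by positivity)
        exact_mod_cast hj.2
      have hfl := sum_flip j (fun s => if t ≤ |rowX i (h, s)| then (1:ℝ) else 0)
      have hsum : ∑ s : Fin n → Bool, (1:ℝ) ≤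
          ∑ s : Fin n → Bool, ((if t ≤ |rowX i (h, s)| then (1:ℝ) else 0) +
            (if t ≤ |rowX i (h, Function.update s j (!s j))| then (1:ℝ) else 0)) := by
        refine Finset.sum_le_sum fun s _ => ?_
        simp only [abs_rowX]
        rw [noise_flip i j hj.1 h s he]
        by_cases c1 : t ≤ |noise i h s|
        · rw [if_pos c1]; split_ifs <;> norm_num
        · have c2 : t ≤ |noise i h s - 2 * (sgn (s j) * zipf j)| := by
            push Not at c1
            rw [abs_lt] at c1
            rw [le_abs]
            rcases sgn_cases (s j) with e | e <;> rw [e]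
            · right; linarith
            · left; linarith
          rw [if_pos c2]; split_ifs <;> norm_num
      rw [Finset.sum_add_distrib, hfl] at hsum
      have h2n : ∑ s : Fin n → Bool, (1:ℝ) = 2^n := by simp
      rw [h2n] at hsum
      linarith
    · rw [if_neg hE, zero_mul]
      exact Finset.sum_nonneg fun s _ => by split_ifs <;> norm_num
  have hs2 : ∀ h : Fin n → Fin B,
      ∑ s : Fin n → Bool, (if t ≤ |rowX i (h, s)| then (1:ℝ) else 0) ≤
      2 * ∑ s : Fin n → Bool, (if t ≤ rowX i (h, s) then (1:ℝ) else 0) := by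
    intro h
    have hfl := sum_flip i (fun s => if t ≤ rowX i (h, s) then (1:ℝ) else 0)
    rw [two_mul]
    nth_rewrite 2 [← hfl]
    rw [← Finset.sum_add_distrib]
    refine Finset.sum_le_sum fun s _ => ?_
    simp only [rowX_flip]
    by_cases c : t ≤ |rowX i (h, s)|
    · rw [if_pos c]
      rcases le_abs.1 c with c | c
      · rw [if_pos c]; split_ifs <;> norm_num
      · rw [if_pos c]; split_ifs <;> norm_num
    · rw [if_neg c]; split_ifs <;> norm_num
  rw [card_row, Fintype.sum_prod_type]
  have hfin : ∑ h : Fin n → Fin B, (if ∃ j ∈ items i B, h j = h i then (1:ℝ) else 0) * (2^n / 2) ≤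
      ∑ h : Fin n → Fin B, 2 * ∑ s : Fin n → Bool, (if t ≤ rowX i (h, s) then (1:ℝ) else 0) :=
    Finset.sum_le_sum fun h _ => (hs h).trans (hs2 h)
  rw [← Finset.sum_mul, ← Finset.mul_sum] at hfin
  have h3 := mul_le_mul_of_nonneg_right hhit (by positivity : (0:ℝ) ≤ 2^n/2)
  linarith

lemma large_prob {n B m : ℕ} (hB : 2 ≤ B) (hm1 : 1 ≤ m) (hm : m ≤ n) (i : Fin n)
    (t : ℝ) (ht : 0 ≤ t) :
    ∑ a : (Fin n → Fin B) × (Fin n → Bool), (if |rowX i a| ≤ t then (1:ℝ) else 0) ≤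
      (Real.exp (-(((m:ℝ) - 1) / B)) + (8 * t * m + 4 / m)) *
        Fintype.card ((Fin n → Fin B) × (Fin n → Bool)) := by
  rw [Fintype.sum_prod_type_right, card_row]
  simp only [abs_rowX]
  calc _ ≤ ∑ s : Fin n → Bool,
        (Real.exp (-(((m:ℝ) - 1) / B)) + (8 * t * m + 4 / m)) * (B:ℝ) ^ n :=
        Finset.sum_le_sum fun s _ => anti hB hm1 hm i s t ht
    _ = _ := by
      rw [Finset.sum_const, card_univ, Fintype.card_fun, nsmul_eq_mul]
      simp; ring

/-- sign of the row error -/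
noncomputable def rowW {n B : ℕ} (i : Fin n) (a : (Fin n → Fin B) × (Fin n → Bool)) : ℝ :=
  sgn (a.2 i) * (if 0 ≤ noise i a.1 a.2 then 1 else -1)

lemma rowW_sum {n B : ℕ} (i : Fin n) :
    ∑ a : (Fin n → Fin B) × (Fin n → Bool), rowW i a = 0 := by
  rw [Fintype.sum_prod_type]
  refine Finset.sum_eq_zero fun h _ => ?_
  have hfl := sum_flip i (fun s => rowW i (h, s))
  have : ∀ s, rowW i (h, Function.update s i (!s i)) = - rowW i (h, s) := by
    intro s
    unfold rowW
    simp only [noise_flip_self, Function.update_self, sgn_not]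
    ring
  simp only [this, Finset.sum_neg_distrib] at hfl
  linarith

lemma rowW_cases {n B : ℕ} (i : Fin n) (a : (Fin n → Fin B) × (Fin n → Bool)) :
    (rowW i a = 1 ∧ 0 ≤ rowX i a) ∨ (rowW i a = -1 ∧ rowX i a ≤ 0) := by
  unfold rowW rowX
  by_cases h0 : 0 ≤ noise i a.1 a.2
  · rcases sgn_cases (a.2 i) with e | e <;> rw [e] <;> simp [h0]
  · have := (not_le.1 h0).le
    rcases sgn_cases (a.2 i) with e | e <;> rw [e] <;> simp [h0, this]

lemma final_large {k n B : ℕ} (hodd : Odd k) (hk : 1000000 ≤ k) (hn : k * B ≤ n) (hkB : k ≤ B)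
    (i : Fin n) :
    (1/100000) / ((B : ℝ) * Real.sqrt (k : ℝ) * Real.log (k : ℝ)) ≤
      expUnif (fun ω : (Fin k → Fin n → Fin B) × (Fin k → Fin n → Bool) =>
            |csEst zipf ω.1 ω.2 i - zipf i|) := by
  set q := Real.sqrt k with hq
  set l := Real.log k with hl
  have hkR : (1000000:ℝ) ≤ k := by exact_mod_cast hk
  have hkBR : (k:ℝ) ≤ B := by exact_mod_cast hkB
  have hk0 : (0:ℝ) < k := by linarith
  have hB0 : (0:ℝ) < B := by linarith
  have hqq : q ^ 2 = k := Real.sq_sqrt (by linarith)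
  have hq1 : 1000 ≤ q := Real.le_sqrt_of_sq_le (by norm_num; linarith)
  have hl1 : 1 ≤ l := by
    rw [hl, Real.le_log_iff_exp_le hk0]
    linarith [Real.exp_one_lt_d9]
  set L := ⌈l⌉₊ with hL
  have hL1 : l ≤ L := Nat.le_ceil l
  have hL2 : (L:ℝ) ≤ 2 * l := by
    have := Nat.ceil_lt_add_one (by linarith : 0 ≤ l)
    linarith
  have hLk : L ≤ k := Nat.ceil_le.2 (by
    have := Real.log_le_sub_one_of_pos hk0
    linarith)
  have hLpos : 1 ≤ L := by
    have : (1:ℝ) ≤ L := by linarith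
    exact_mod_cast this
  set t : ℝ := 1 / (10000 * (B * q * l)) with ht
  have ht0 : 0 ≤ t := by positivity
  have hmn : B * L ≤ n := by nlinarith
  have hB2 : 2 ≤ B := by omega
  have hlp := large_prob hB2 (by nlinarith : 1 ≤ B * L) hmn i t ht0
  have hLR : (1:ℝ) ≤ L := by exact_mod_cast hLpos
  have b1 : Real.exp (-((((B * L : ℕ) : ℝ) - 1) / B)) ≤ 3 / k := by
    have h1 : -((((B * L : ℕ) : ℝ) - 1) / B) ≤ 1 - l := by
      push_cast
      have : ((B:ℝ) * L - 1) / B = L - 1 / B := by field_simp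
      rw [this]
      have : 1 / (B:ℝ) ≤ 1 := by rw [div_le_one hB0]; linarith
      linarith
    calc _ ≤ Real.exp (1 - l) := Real.exp_le_exp.2 h1
      _ = Real.exp 1 / k := by rw [Real.exp_sub, hl, Real.exp_log hk0]
      _ ≤ _ := by gcongr; linarith [Real.exp_one_lt_d9]
  have b2 : 8 * t * ((B * L : ℕ) : ℝ) ≤ 16 / 10000 / q := by
    push_cast
    calc 8 * t * (B * L) ≤ 8 * t * (B * (2 * l)) := by gcongr
      _ = _ := by rw [ht]; field_simp; norm_num
  have b3 : 4 / ((B * L : ℕ) : ℝ) ≤ 4 / k := by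
    push_cast
    gcongr
    nlinarith
  have b4 : 7 / (k:ℝ) ≤ 7 / 1000 / q := by
    rw [← hqq, div_div, div_le_div_iff_of_pos_left (by norm_num) (by positivity) (by positivity)]
    nlinarith
  have hp : Real.exp (-((((B * L : ℕ) : ℝ) - 1) / B)) + (8 * t * ((B * L : ℕ) : ℝ) + 4 / ((B * L : ℕ) : ℝ))
      ≤ 1 / (100 * q) := by
    have e1 : 3 / (k:ℝ) + 4 / k = 7 / k := by ring
    have e2 : 1 / (100 * q) = 7 / 1000 / q + 16 / 10000 / q + 14 / 10000 / q := by
      field_simp; norm_num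
    have : 0 ≤ 14 / 10000 / q := by positivity
    linarith
  have hmain := abstract_large k hodd hk (rowX (B := B) i) (rowW i)
    (fun a => by rcases rowW_cases i a with h | h <;> simp [h.1]) (rowW_sum i) t ht0
    (fun a e hx => by
      rcases rowW_cases i a with h | h
      · rwa [abs_of_nonneg h.2] at hx
      · rw [e] at h; norm_num at h)
    (fun a e hx => by
      rcases rowW_cases i a with h | h
      · rw [e] at h; norm_num at h
      · rw [abs_of_nonpos h.2] at hx; linarith)
    (hlp.trans (mul_le_mul_of_nonneg_right hp (by positivity))) (zipf i)
  rw [exp_reindex]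
  have hC : (0:ℝ) < (Fintype.card ((Fin n → Fin B) × (Fin n → Bool)) : ℝ) := by
    rw [card_row]; positivity
  rw [le_div_iff₀ (pow_pos hC k)]
  refine le_trans (le_of_eq ?_) hmain
  congr 1
  rw [ht]; field_simp; norm_num

lemma final_small {k n B K : ℕ} (hodd : Odd k) (hk : 3 ≤ k) (hkK : k ≤ K) (hn : k * B ≤ n)
    (hkB : k ≤ B) (i : Fin n) :
    (1/10)^K / ((B : ℝ) * Real.sqrt (k : ℝ) * Real.log (k : ℝ)) ≤
      expUnif (fun ω : (Fin k → Fin n → Fin B) × (Fin k → Fin n → Bool) =>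
            |csEst zipf ω.1 ω.2 i - zipf i|) := by
  have hkR : (3:ℝ) ≤ k := by exact_mod_cast hk
  have hkBR : (k:ℝ) ≤ B := by exact_mod_cast hkB
  have hB0 : (0:ℝ) < B := by linarith
  have hq1 : 1 ≤ Real.sqrt k := Real.le_sqrt_of_sq_le (by norm_num; linarith)
  have hl1 : 1 ≤ Real.log k := by
    rw [Real.le_log_iff_exp_le (by linarith)]
    linarith [Real.exp_one_lt_d9]
  have hsp := small_prob (by omega : 3 ≤ B) (by nlinarith : B ≤ n) i
  have hmain := abstract_small k hodd (rowX (B := B) i) (1 / (B:ℝ)) (1/10) (by positivity)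
    (by norm_num) hsp (zipf i)
  rw [exp_reindex]
  have hC : (0:ℝ) < (Fintype.card ((Fin n → Fin B) × (Fin n → Bool)) : ℝ) := by
    rw [card_row]; positivity
  rw [le_div_iff₀ (pow_pos hC k)]
  refine le_trans ?_ hmain
  apply mul_le_mul_of_nonneg_right _ (by positivity)
  have h1 : ((1:ℝ)/10)^K ≤ (1/10)^k := pow_le_pow_of_le_one (by norm_num) (by norm_num) hkK
  have h2 : (B:ℝ) ≤ (B : ℝ) * Real.sqrt (k : ℝ) * Real.log (k : ℝ) := by
    have : (1:ℝ) ≤ Real.sqrt k * Real.log k := by nlinarith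
    rw [mul_assoc]; nlinarith
  calc _ ≤ ((1:ℝ)/10)^k / B := by gcongr
    _ = _ := by ring

end CSL

/-- for odd `k ≥ 3` with `k·B ≤ n` and `k ≤ B`, the expected error
of `k`-row Count-Sketch on Zipfian input is `Ω(1/(B·√k·log k))`. -/
theorem countSketch_multi_row_zipfian_lower :
    ∃ c : ℝ, 0 < c ∧
      ∀ k n B : ℕ, Odd k → 3 ≤ k → k * B ≤ n → k ≤ B → ∀ i : Fin n,
        c / ((B : ℝ) * Real.sqrt (k : ℝ) * Real.log (k : ℝ)) ≤
          expUnif (fun ω : (Fin k → Fin n → Fin B) × (Fin k → Fin n → Bool) =>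
            |csEst zipf ω.1 ω.2 i - zipf i|) := by
  obtain ⟨K, hK⟩ : ∃ K : ℕ, K = 1000000 := ⟨_, rfl⟩
  refine ⟨min (1/100000) ((1/10)^K), by positivity, ?_⟩
  intro k n B hodd hk hn hkB i
  have hlog : 0 ≤ Real.log (k:ℝ) := Real.log_natCast_nonneg k
  by_cases hkK : k ≤ K
  · refine le_trans ?_ (CSL.final_small hodd hk hkK hn hkB i)
    gcongr
    exact min_le_right _ _
  · refine le_trans ?_ (CSL.final_large hodd (by omega) hn hkB i)
    gcongr
    exact min_le_left _ _
end

section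
/- There exist an absolute constant c > 0 and an absolute constant B_0 ∈ ℕ such that the following holds. Let n, B ∈ ℕ with B ≥ B_0 and n ≥ 2B, let h : {1,...,n} → {1,...,B} and s : {1,...,n} → {−1,1} be truly random, fix i ∈ {1,...,n}, and set X = Σ_{j∈{1,...,n}, j≠i} 1[h(j)=h(i)]·s(j)·(1/j). Then for every real t with 0 < t ≤ 1/(2B), Pr[−t ≤ X ≤ t] ≥ c·t·B. -/
open Classical in
/-- Probability of an event on a finite probability space with the
uniform distribution. -/
noncomputable def prUnif {Ω : Type*} [Fintype Ω] (P : Ω → Prop) : ℝ :=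
  (∑ ω : Ω, if P ω then (1 : ℝ) else 0) / (Fintype.card Ω : ℝ)

lemma gauss_cos (c x : ℝ) (hc : 0 < c) :
    ∫ u : ℝ, Real.cos (u * x) * Real.exp (-c * u ^ 2) =
      √(Real.pi / c) * Real.exp (-x ^ 2 / (4 * c)) := by
  have h := fourierIntegral_gaussian (b := (c : ℂ)) (by simpa using hc) (x : ℂ)
  have h1 : ∀ u : ℝ, Real.cos (u * x) * Real.exp (-c * u ^ 2) =
      (Complex.exp (Complex.I * x * u) * Complex.exp (-(c : ℂ) * (u : ℂ) ^ 2)).re := by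
    intro u
    have e1 : Complex.exp (-(c : ℂ) * (u : ℂ) ^ 2) = ((Real.exp (-c * u ^ 2) : ℝ) : ℂ) := by
      push_cast; rfl
    have e2 : Complex.I * x * u = ((u * x : ℝ) : ℂ) * Complex.I := by push_cast; ring
    rw [e1, e2, Complex.re_mul_ofReal, Complex.exp_ofReal_mul_I_re]
  have hr : (Real.pi / (c : ℂ)) ^ (1 / 2 : ℂ) * Complex.exp (-(x : ℂ) ^ 2 / (4 * (c : ℂ))) =
      ((√(Real.pi / c) * Real.exp (-x ^ 2 / (4 * c)) : ℝ) : ℂ) := by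
    rw [Real.sqrt_eq_rpow]
    push_cast
    rw [Complex.ofReal_cpow (by positivity)]
    push_cast
    rfl
  rw [hr] at h
  have hint : MeasureTheory.Integrable (fun u : ℝ => 
      Complex.exp (Complex.I * x * u) * Complex.exp (-(c : ℂ) * (u : ℂ) ^ 2)) := by
    by_contra hn
    rw [MeasureTheory.integral_undef hn] at h
    have : (√(Real.pi / c) * Real.exp (-x ^ 2 / (4 * c)) : ℝ) ≠ 0 := by
      have := Real.pi_pos
      positivity
    exact this (by exact_mod_cast h.symm)
  simp_rw [h1]
  have h2 := integral_re hint
  have h3 : ∀ z : ℂ, RCLike.re z = z.re := fun _ => rfl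
  simp only [h3] at h2
  rw [h2, h, Complex.ofReal_re]

lemma gauss_int (c x : ℝ) (hc : 0 < c) :
    MeasureTheory.Integrable (fun u : ℝ => Real.cos (u * x) * Real.exp (-c * u ^ 2)) := by
  by_contra hn
  have h := gauss_cos c x hc
  rw [MeasureTheory.integral_undef hn] at h
  have : (√(Real.pi / c) * Real.exp (-x ^ 2 / (4 * c)) : ℝ) ≠ 0 := by
    have := Real.pi_pos
    positivity
  exact this h.symm

/-- Abstract small ball bound from a nonnegative characteristic function. -/
lemma small_ball {Ω : Type*} [Fintype Ω] (X : Ω → ℝ) (t b δ : ℝ) (ht : 0 < t) (hb : 0 < b)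
    (htb : t * b ≤ 1) (hδ : 0 ≤ δ)
    (hpos : ∀ u, 0 ≤ ∑ ω, Real.cos (u * X ω))
    (hlow : ∀ u, 0 ≤ u → u ≤ b → δ ≤ ∑ ω, Real.cos (u * X ω)) :
    t * b * (δ * Real.exp (-1)) / 12 ≤ ∑ ω, (2 * Real.exp (-(2 * (X ω / t) ^ 2)) - 
      Real.exp (-(X ω / t) ^ 2)) := by
  set S : ℝ → ℝ := fun u => ∑ ω, Real.cos (u * X ω) with hS
  have hI : ∀ c, 0 < c → MeasureTheory.Integrable (fun u => S u * Real.exp (-c * u ^ 2)) ∧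
      ∫ u, S u * Real.exp (-c * u ^ 2) = √(Real.pi / c) * ∑ ω, Real.exp (-X ω ^ 2 / (4 * c)) := by
    intro c hc
    simp only [hS, Finset.sum_mul]
    refine ⟨MeasureTheory.integrable_finsetSum _ fun ω _ => gauss_int c _ hc, ?_⟩
    rw [MeasureTheory.integral_finsetSum _ fun ω _ => gauss_int c _ hc, Finset.mul_sum]
    exact Finset.sum_congr rfl fun ω _ => gauss_cos c _ hc
  obtain ⟨i1, e1⟩ := hI (t ^ 2 / 8) (by positivity)
  obtain ⟨i2, e2⟩ := hI (t ^ 2 / 4) (by positivity)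
  have hmono : ∫ u, S u * Real.exp (-(t ^ 2 / 4) * u ^ 2) ≤
      ∫ u, S u * Real.exp (-(t ^ 2 / 8) * u ^ 2) := by
    refine MeasureTheory.integral_mono i2 i1 fun u => ?_
    refine mul_le_mul_of_nonneg_left (Real.exp_le_exp.2 ?_) (hpos u)
    nlinarith [mul_nonneg (sq_nonneg t) (sq_nonneg u)]
  have hlb : b * (δ * Real.exp (-1)) ≤ ∫ u, S u * Real.exp (-(t ^ 2 / 8) * u ^ 2) := by
    have hset : ∫ u in Set.Icc 0 b, S u * Real.exp (-(t ^ 2 / 8) * u ^ 2) ≤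
        ∫ u, S u * Real.exp (-(t ^ 2 / 8) * u ^ 2) :=
      MeasureTheory.setIntegral_le_integral i1
        (Filter.Eventually.of_forall fun u => mul_nonneg (hpos u) (Real.exp_pos _).le)
    refine le_trans ?_ hset
    have hc : ∫ u in Set.Icc 0 b, (δ * Real.exp (-1)) = b * (δ * Real.exp (-1)) := by
      simp [hb.le]
    rw [← hc]
    refine MeasureTheory.setIntegral_mono_on
      (MeasureTheory.integrableOn_const (by simp)) i1.integrableOn measurableSet_Icc ?_
    intro u hu
    refine mul_le_mul (hlow u hu.1 hu.2) (Real.exp_le_exp.2 ?_) (Real.exp_pos _).le (hpos u)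
    have : t * u ≤ 1 := le_trans (mul_le_mul_of_nonneg_left hu.2 ht.le) htb
    have h0 : 0 ≤ t * u := mul_nonneg ht.le hu.1
    nlinarith
  set G1 := ∑ ω, Real.exp (-X ω ^ 2 / (4 * (t ^ 2 / 8))) with hG1
  set G2 := ∑ ω, Real.exp (-X ω ^ 2 / (4 * (t ^ 2 / 4))) with hG2
  have hgoal : ∑ ω, (2 * Real.exp (-(2 * (X ω / t) ^ 2)) - Real.exp (-(X ω / t) ^ 2)) =
      2 * G1 - G2 := by
    rw [Finset.sum_sub_distrib, ← Finset.mul_sum]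
    have g1 : ∑ ω, Real.exp (-(2 * (X ω / t) ^ 2)) = G1 := by
      refine Finset.sum_congr rfl fun ω _ => ?_
      congr 1; field_simp; ring
    have g2 : ∑ ω, Real.exp (-(X ω / t) ^ 2) = G2 := by
      refine Finset.sum_congr rfl fun ω _ => ?_
      congr 1; field_simp
    rw [g1, g2]
  rw [hgoal]
  rw [e1, e2] at hmono
  rw [e1] at hlb
  have s1 : √(Real.pi / (t ^ 2 / 8)) = √2 * (√(Real.pi * 4) / t) := by
    rw [← Real.sqrt_sq ht.le, ← Real.sqrt_div' _ (by positivity), ← Real.sqrt_mul (by norm_num),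
      Real.sqrt_sq ht.le]
    congr 1; field_simp; ring
  have s2 : √(Real.pi / (t ^ 2 / 4)) = √(Real.pi * 4) / t := by
    rw [← Real.sqrt_sq ht.le, ← Real.sqrt_div' _ (by positivity), Real.sqrt_sq ht.le]
    congr 1; field_simp
  rw [s1, s2] at hmono
  rw [s1] at hlb
  have hp : 0 < √(Real.pi * 4) / t := by have := Real.pi_pos; positivity
  have hq : √(Real.pi * 4) ≤ 4 := by
    rw [Real.sqrt_le_left (by norm_num)]; nlinarith [Real.pi_le_four]
  have hr2 : √2 ≤ 3 / 2 := by
    rw [Real.sqrt_le_left (by norm_num)]; norm_num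
  have hG1n : 0 ≤ G1 := Finset.sum_nonneg fun _ _ => (Real.exp_pos _).le
  have h21 : G2 ≤ √2 * G1 := by
    have : (√(Real.pi * 4) / t) * G2 ≤ (√(Real.pi * 4) / t) * (√2 * G1) := by linarith
    exact le_of_mul_le_mul_left this hp
  have h3 : G2 ≤ 3 / 2 * G1 := h21.trans (mul_le_mul_of_nonneg_right hr2 hG1n)
  have h4 : t * b * (δ * Real.exp (-1)) ≤ 6 * G1 := by
    calc t * b * (δ * Real.exp (-1)) = t * (b * (δ * Real.exp (-1))) := by ring
      _ ≤ t * (√2 * (√(Real.pi * 4) / t) * G1) := mul_le_mul_of_nonneg_left hlb ht.le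
      _ = √2 * √(Real.pi * 4) * G1 := by field_simp
      _ ≤ (3 / 2) * 4 * G1 := by gcongr
      _ = 6 * G1 := by ring
  linarith

lemma ind_bound (t x : ℝ) (ht : 0 < t) :
    2 * Real.exp (-(2 * (x / t) ^ 2)) - Real.exp (-(x / t) ^ 2) ≤
      if -t ≤ x ∧ x ≤ t then (1 : ℝ) else 0 := by
  have hy : Real.exp (-(2 * (x / t) ^ 2)) = Real.exp (-(x / t) ^ 2) ^ 2 := by
    rw [← Real.exp_nat_mul]; congr 1; push_cast; ring
  have hpos := Real.exp_pos (-(x / t) ^ 2)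
  rw [hy]
  split_ifs with h
  · have : Real.exp (-(x / t) ^ 2) ≤ 1 := Real.exp_le_one_iff.2 (by nlinarith [sq_nonneg (x / t)])
    nlinarith
  · have h1 : 1 ≤ (x / t) ^ 2 := by
      rw [div_pow, one_le_div (by positivity)]
      by_contra hc
      push Not at hc
      exact h (abs_le.1 (abs_le_of_sq_le_sq hc.le ht.le))
    have h2 : Real.exp (-(x / t) ^ 2) ≤ 1 / 2 := by
      have h3 := Real.add_one_le_exp ((x / t) ^ 2)
      rw [Real.exp_neg, one_div]
      exact inv_anti₀ (by norm_num) (by linarith)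
    nlinarith

/-- Summing over the signs. -/
lemma sum_signs {n : ℕ} (a : Fin n → ℝ) :
    ∑ s : Fin n → Bool, Real.cos (∑ j, sgn (s j) * a j) = 2 ^ n * ∏ j, Real.cos (a j) := by
  have h : ∑ s : Fin n → Bool, Complex.exp (((∑ j, sgn (s j) * a j : ℝ) : ℂ) * Complex.I) =
      ((2 ^ n * ∏ j, Real.cos (a j) : ℝ) : ℂ) := by
    have : ∀ s : Fin n → Bool, Complex.exp (((∑ j, sgn (s j) * a j : ℝ) : ℂ) * Complex.I) =
        ∏ j, Complex.exp (((sgn (s j) * a j : ℝ) : ℂ) * Complex.I) := by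
      intro s
      rw [← Complex.exp_sum, Complex.ofReal_sum, Finset.sum_mul]
    simp_rw [this]
    rw [← Fintype.prod_sum (fun j (b : Bool) => 
      Complex.exp (((sgn b * a j : ℝ) : ℂ) * Complex.I))]
    push_cast
    have h2 : (2 : ℂ) ^ n = ∏ _j : Fin n, (2 : ℂ) := by simp
    rw [h2, ← Finset.prod_mul_distrib]
    refine Finset.prod_congr rfl fun j _ => ?_
    rw [Complex.two_cos]
    simp [sgn]
  have h' := congrArg Complex.re h
  rw [Complex.re_sum, Complex.ofReal_re] at h'
  simpa only [Complex.exp_ofReal_mul_I_re] using h'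

/-- Summing over the hash values. -/
lemma sum_hash {n B : ℕ} (i : Fin n) (a : Fin n → ℝ) :
    ∑ h : Fin n → Fin B, ∏ j, (if j ≠ i ∧ h j = h i then a j else 1) =
      B * ∏ j ∈ Finset.univ.erase i, ((B : ℝ) - 1 + a j) := by
  classical
  have key : ∀ h : Fin n → Fin B, ∏ j, (if j ≠ i ∧ h j = h i then a j else 1) =
      ∑ k : Fin B, ∏ j, (if j = i then (if h j = k then 1 else 0) else 
        (if h j = k then a j else 1)) := by
    intro h
    rw [Finset.sum_eq_single (h i)]
    · refine Finset.prod_congr rfl fun j _ => ?_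
      by_cases hj : j = i
      · subst hj; simp
      · simp [hj]
    · intro k _ hk
      exact Finset.prod_eq_zero (Finset.mem_univ i) (by simp [hk.symm])
    · simp
  simp_rw [key]
  rw [Finset.sum_comm]
  have : ∀ k : Fin B, ∑ h : Fin n → Fin B, ∏ j, (if j = i then (if h j = k then 1 else 0) else 
        (if h j = k then a j else 1)) = ∏ j ∈ Finset.univ.erase i, ((B : ℝ) - 1 + a j) := by
    intro k
    rw [← Fintype.prod_sum (fun j (b : Fin B) => if j = i then (if b = k then (1 : ℝ) else 0) else 
        (if b = k then a j else 1))]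
    rw [← Finset.mul_prod_erase _ _ (Finset.mem_univ i)]
    have h1 : (∑ b : Fin B, if i = i then (if b = k then (1 : ℝ) else 0) else 
        (if b = k then a i else 1)) = 1 := by simp
    rw [h1, one_mul]
    refine Finset.prod_congr rfl fun j hj => ?_
    have hj' : j ≠ i := Finset.ne_of_mem_erase hj
    simp only [hj', if_false]
    have h2 : ∀ b : Fin B, (if b = k then a j else (1 : ℝ)) = 1 + if b = k then a j - 1 else 0 := by
      intro b; split_ifs <;> ring
    simp_rw [h2]
    rw [Finset.sum_add_distrib]
    simp
    ring
  simp_rw [this]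
  simp

lemma charfun {n B : ℕ} (hB : 0 < B) (i : Fin n) (u : ℝ) :
    ∑ ω : (Fin n → Fin B) × (Fin n → Bool), Real.cos (u * (∑ j ∈ Finset.univ.erase i,
                    if ω.1 j = ω.1 i then sgn (ω.2 j) * ((j : ℝ) + 1)⁻¹ else 0)) =
    (B : ℝ) ^ n * 2 ^ n * ∏ j ∈ Finset.univ.erase i, (1 - (1 - Real.cos (u * ((j : ℝ) + 1)⁻¹)) / B) := by
  rw [Fintype.sum_prod_type]
  have h1 : ∀ h : Fin n → Fin B, ∑ s : Fin n → Bool, 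
      Real.cos (u * (∑ j ∈ Finset.univ.erase i,
        if h j = h i then sgn (s j) * ((j : ℝ) + 1)⁻¹ else 0)) =
      2 ^ n * ∏ j, (if j ≠ i ∧ h j = h i then Real.cos (u * ((j : ℝ) + 1)⁻¹) else 1) := by
    intro h
    have := sum_signs (fun j : Fin n => if j ≠ i ∧ h j = h i then u * ((j : ℝ) + 1)⁻¹ else 0)
    convert this using 1
    · refine Finset.sum_congr rfl fun s _ => ?_
      congr 1
      rw [Finset.mul_sum, ← Finset.sum_erase (a := i) Finset.univ (by simp)]
      refine Finset.sum_congr rfl fun j hj => ?_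
      have hj' : j ≠ i := Finset.ne_of_mem_erase hj
      by_cases hh : h j = h i
      · simp [hj', hh]; ring
      · simp [hh]
    · congr 1
      refine Finset.prod_congr rfl fun j _ => ?_
      split_ifs <;> simp
  simp only [h1]
  rw [← Finset.mul_sum, sum_hash]
  have hB' : (B : ℝ) ≠ 0 := by positivity
  have h2 : ∏ j ∈ Finset.univ.erase i, ((B : ℝ) - 1 + Real.cos (u * ((j : ℝ) + 1)⁻¹)) =
      (B : ℝ) ^ (n - 1) * 
      ∏ j ∈ Finset.univ.erase i, (1 - (1 - Real.cos (u * ((j : ℝ) + 1)⁻¹)) / B) := by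
    have : (B : ℝ) ^ (n - 1) = ∏ j ∈ Finset.univ.erase i, (B : ℝ) := by
      simp [Finset.card_erase_of_mem]
    rw [this, ← Finset.prod_mul_distrib]
    refine Finset.prod_congr rfl fun j _ => ?_
    field_simp
    ring
  rw [h2]
  have hn : (B : ℝ) ^ n = B * (B : ℝ) ^ (n - 1) := by
    have := i.pos
    rw [← pow_succ', Nat.sub_add_cancel this]
  rw [hn]; ring

lemma exp_le_one_sub (y : ℝ) (h0 : 0 ≤ y) (h1 : y ≤ 1 / 2) : Real.exp (-(2 * y)) ≤ 1 - y := by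
  have h3 := Real.add_one_le_exp (2 * y)
  rw [Real.exp_neg]
  refine (inv_le_of_inv_le₀ (by linarith) ?_)
  refine le_trans ?_ h3
  rw [inv_le_iff_one_le_mul₀ (by linarith)]
  nlinarith

lemma term_bound (B : ℝ) (hB : 1 ≤ B) (j u : ℝ) (hj : 0 ≤ j) (hu : 0 ≤ u) (huB : u ≤ B) :
    1 - Real.cos (u * (j + 1)⁻¹) ≤ 12 * B ^ 2 * ((j + B)⁻¹ - (j + 1 + B)⁻¹) := by
  have e : (j + B)⁻¹ - (j + 1 + B)⁻¹ = 1 / ((j + B) * (j + 1 + B)) := by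
    field_simp; ring
  rw [e, mul_one_div, le_div_iff₀ (by positivity)]
  have hc := Real.neg_one_le_cos (u * (j + 1)⁻¹)
  have hc2 := Real.one_sub_sq_div_two_le_cos (x := u * (j + 1)⁻¹)
  by_cases h : j + 1 ≤ B
  · have : (j + B) * (j + 1 + B) ≤ 4 * B ^ 2 := by nlinarith
    nlinarith [sq_nonneg B, mul_nonneg (show 0 ≤ j + B by linarith) (show 0 ≤ j + 1 + B by linarith)]
  · push Not at h
    have h1 : (j + B) * (j + 1 + B) ≤ 4 * (j + 1) ^ 2 := by nlinarith
    have h2 : 1 - Real.cos (u * (j + 1)⁻¹) ≤ u ^ 2 / (j + 1) ^ 2 / 2 := by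
      have : (u * (j + 1)⁻¹) ^ 2 = u ^ 2 / (j + 1) ^ 2 := by field_simp
      rw [this] at hc2; linarith
    calc _ ≤ u ^ 2 / (j + 1) ^ 2 / 2 * (4 * (j + 1) ^ 2) := by
          refine mul_le_mul h2 h1 (by positivity) (by positivity)
      _ = 2 * u ^ 2 := by field_simp; ring
      _ ≤ 12 * B ^ 2 := by nlinarith

lemma prod_bound {n B : ℕ} (hB : 4 ≤ B) (i : Fin n) (u : ℝ) (hu : 0 ≤ u) (huB : u ≤ B) :
    Real.exp (-24) ≤ 
      ∏ j ∈ Finset.univ.erase i, (1 - (1 - Real.cos (u * ((j : ℝ) + 1)⁻¹)) / B) := by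
  have hB4 : (4 : ℝ) ≤ B := by exact_mod_cast hB
  have hle : ∀ j : Fin n, (1 - Real.cos (u * ((j : ℝ) + 1)⁻¹)) / B ≤ 1 / 2 := by
    intro j
    rw [div_le_iff₀ (by linarith)]
    linarith [Real.neg_one_le_cos (u * ((j : ℝ) + 1)⁻¹)]
  have hge : ∀ j : Fin n, 0 ≤ (1 - Real.cos (u * ((j : ℝ) + 1)⁻¹)) / B := by
    intro j
    exact div_nonneg (by linarith [Real.cos_le_one (u * ((j : ℝ) + 1)⁻¹)]) (by linarith)
  have h1 : ∏ j ∈ Finset.univ.erase i, 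
      Real.exp (-(2 * ((1 - Real.cos (u * ((j : ℝ) + 1)⁻¹)) / B))) ≤
      ∏ j ∈ Finset.univ.erase i, (1 - (1 - Real.cos (u * ((j : ℝ) + 1)⁻¹)) / B) :=
    Finset.prod_le_prod (fun _ _ => (Real.exp_pos _).le) 
      fun j _ => exp_le_one_sub _ (hge j) (hle j)
  refine le_trans ?_ h1
  rw [← Real.exp_sum, Real.exp_le_exp, Finset.sum_neg_distrib, neg_le_neg_iff, ← Finset.mul_sum]
  have h2 : ∑ j ∈ Finset.univ.erase i, (1 - Real.cos (u * ((j : ℝ) + 1)⁻¹)) / B ≤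
      ∑ j : Fin n, (1 - Real.cos (u * ((j : ℝ) + 1)⁻¹)) / B :=
    Finset.sum_le_sum_of_subset_of_nonneg (Finset.erase_subset _ _) fun j _ _ => hge j
  have h3 : ∑ j : Fin n, (1 - Real.cos (u * ((j : ℝ) + 1)⁻¹)) / B ≤
      ∑ j : Fin n, 12 * (B : ℝ) * (((j : ℝ) + B)⁻¹ - ((j : ℝ) + 1 + B)⁻¹) := by
    refine Finset.sum_le_sum fun j _ => ?_
    rw [div_le_iff₀ (by linarith)]
    refine (term_bound B (by linarith) j u (by positivity) hu huB).trans (le_of_eq ?_)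
    ring
  have h4 : ∑ j : Fin n, 12 * (B : ℝ) * (((j : ℝ) + B)⁻¹ - ((j : ℝ) + 1 + B)⁻¹) ≤ 12 := by
    rw [← Finset.mul_sum, 
      Fin.sum_univ_eq_sum_range (fun j : ℕ => ((j : ℝ) + B)⁻¹ - ((j : ℝ) + 1 + B)⁻¹) n]
    have := Finset.sum_range_sub' (fun j : ℕ => ((j : ℝ) + B)⁻¹) n
    push_cast at this
    rw [this, zero_add, mul_sub, mul_assoc, mul_inv_cancel₀ (by linarith)]
    have : 0 ≤ 12 * (B : ℝ) * ((n : ℝ) + B)⁻¹ := by positivity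
    linarith
  linarith

/-- anti-concentration of the one-row Count-Sketch counter
`X = Σ_{j≠i} 1[h(j)=h(i)]·s(j)/j` on Zipfian input:
`Pr[-t ≤ X ≤ t] ≥ c·t·B` for all `0 < t ≤ 1/(2B)`. -/
theorem countSketch_counter_anticoncentration :
    ∃ c : ℝ, 0 < c ∧ ∃ B₀ : ℕ,
      ∀ n B : ℕ, B₀ ≤ B → 2 * B ≤ n → ∀ i : Fin n, ∀ t : ℝ,
        0 < t → t ≤ 1 / (2 * (B : ℝ)) →
        c * t * (B : ℝ) ≤
          prUnif (fun ω : (Fin n → Fin B) × (Fin n → Bool) =>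
            -t ≤ (∑ j ∈ Finset.univ.erase i,
                    if ω.1 j = ω.1 i then sgn (ω.2 j) * ((j : ℝ) + 1)⁻¹ else 0) ∧
            (∑ j ∈ Finset.univ.erase i,
                    if ω.1 j = ω.1 i then sgn (ω.2 j) * ((j : ℝ) + 1)⁻¹ else 0) ≤ t) := by
  refine ⟨Real.exp (-24) * Real.exp (-1) / 12, by positivity, 4, ?_⟩
  intro n B hB _ i t ht htB
  have hB4 : (4 : ℝ) ≤ B := by exact_mod_cast hB
  have hB0 : 0 < B := by omega
  have hN : (0 : ℝ) < (B : ℝ) ^ n * 2 ^ n := by positivity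
  have hcard : (Fintype.card ((Fin n → Fin B) × (Fin n → Bool)) : ℝ) = (B : ℝ) ^ n * 2 ^ n := by
    simp
  set X : (Fin n → Fin B) × (Fin n → Bool) → ℝ := fun ω => ∑ j ∈ Finset.univ.erase i,
    if ω.1 j = ω.1 i then sgn (ω.2 j) * ((j : ℝ) + 1)⁻¹ else 0 with hX
  have htb : t * B ≤ 1 := by
    rw [le_div_iff₀ (by linarith)] at htB
    nlinarith
  have hsb := small_ball X t B ((B : ℝ) ^ n * 2 ^ n * Real.exp (-24)) ht (by linarith) htb
    (by positivity)
    (by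
      intro u
      rw [hX, charfun hB0]
      refine mul_nonneg hN.le (Finset.prod_nonneg fun j _ => ?_)
      have : (1 - Real.cos (u * ((j : ℝ) + 1)⁻¹)) / B ≤ 1 := by
        rw [div_le_iff₀ (by linarith)]
        linarith [Real.neg_one_le_cos (u * ((j : ℝ) + 1)⁻¹)]
      linarith)
    (by
      intro u h0 h1
      rw [hX, charfun hB0]
      exact mul_le_mul_of_nonneg_left (prod_bound hB i u h0 h1) hN.le)
  unfold prUnif
  rw [hcard, le_div_iff₀ hN]
  have hfin := hsb.trans (Finset.sum_le_sum fun ω _ => ind_bound t (X ω) ht)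
  refine le_trans (le_of_eq ?_) (hfin.trans (le_of_eq ?_))
  · ring
  · refine Finset.sum_congr rfl fun ω _ => ?_
    congr
end
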